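/- arXiv:1606.03651 — 2 statements merged into one kernel-verified Lean document; each statement's English description precedes it below -/
import Mathlib

section
/- Let X be a real-valued random variable with unbounded distribution F and Y a nonnegative random variable with distribution G, neither degenerate at zero, with X and Y independent, and let H be the distribution of XY. Suppose Assumption 2 holds: Ḡ(bx)=o(H̄(x)) as x→∞ for every constant b>0. If F belongs to the class S(γ) for some γ≥0, then H belongs to S(γ/β_G), where β_G=sup{y:G(y)<1}∈(0,∞] and γ/β_G is understood as 0 when β_G=∞. -/
open MeasureTheory ProbabilityTheory Filter Set Asymptotics

noncomputable section

/-- The tail (survival) function `x ↦ P(Z > x)` of a random variable `Z`. -/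
def rvTail {Ω : Type*} [MeasureSpace Ω] (Z : Ω → ℝ) (x : ℝ) : ℝ :=
  (ℙ {ω | x < Z ω}).toReal

/-- The cumulative distribution function `x ↦ P(Z ≤ x)` of a random variable `Z`. -/
def rvCdf {Ω : Type*} [MeasureSpace Ω] (Z : Ω → ℝ) (x : ℝ) : ℝ :=
  (ℙ {ω | Z ω ≤ x}).toReal

/-- The left limit of the cdf, `G(y-) = P(Z < y)`. -/
def rvCdfLeft {Ω : Type*} [MeasureSpace Ω] (Z : Ω → ℝ) (y : ℝ) : ℝ :=
  (ℙ {ω | Z ω < y}).toReal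

/-- The distribution of `Z` is unbounded (above): its tail is positive for every `x > 0`. -/
def UnboundedDist {Ω : Type*} [MeasureSpace Ω] (Z : Ω → ℝ) : Prop :=
  ∀ x > 0, 0 < rvTail Z x

/-- The support `D_Z = {y : P(Z ∈ (y - δ, y + δ)) > 0 for all δ > 0}` of the
distribution of `Z`. -/
def distSupport {Ω : Type*} [MeasureSpace Ω] (Z : Ω → ℝ) : Set ℝ :=
  {y | ∀ δ > 0, 0 < ℙ {ω | Z ω ∈ Ioo (y - δ) (y + δ)}}

/-- The distribution of `Z` belongs to the class `L(γ)`: it is unbounded above and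
`P(Z > x - t) ~ e^{γ t} P(Z > x)` as `x → ∞`, for every `t > 0`. -/
def MemLGamma {Ω : Type*} [MeasureSpace Ω] (Z : Ω → ℝ) (γ : ℝ) : Prop :=
  UnboundedDist Z ∧
    ∀ t > 0, (fun x => rvTail Z (x - t)) ~[atTop] (fun x => Real.exp (γ * t) * rvTail Z x)

/-- The tail of the two-fold convolution of the distribution of `Z` with itself. -/
def convSqTail {Ω : Type*} [MeasureSpace Ω] (Z : Ω → ℝ) (x : ℝ) : ℝ :=
  (((Measure.map Z ℙ).conv (Measure.map Z ℙ)) (Ioi x)).toReal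

/-- The distribution of `Z` belongs to the class `S(γ)`: it belongs to `L(γ)`, the
exponential moment `c = ∫ e^{γ y} dV(y)` is finite, and the tail of the two-fold
convolution satisfies `V̄*²(x) ~ 2 c V̄(x)` as `x → ∞`. -/
def MemSGamma {Ω : Type*} [MeasureSpace Ω] (Z : Ω → ℝ) (γ : ℝ) : Prop :=
  MemLGamma Z γ ∧
    Integrable (fun y => Real.exp (γ * y)) (Measure.map Z ℙ) ∧
    (fun x => convSqTail Z x) ~[atTop]
      (fun x => 2 * (∫ y, Real.exp (γ * y) ∂(Measure.map Z ℙ)) * rvTail Z x)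

open Classical in
/-- `γ / β_G`, where `β_G = sup {y : G(y) < 1}` is the right endpoint of the distribution
of `Z`, with the convention that `γ / β_G = 0` when `β_G = ∞`.
(Note that `G(y) < 1 ↔ P(Z > y) > 0`.) -/
def gammaOverBeta {Ω : Type*} [MeasureSpace Ω] (Z : Ω → ℝ) (γ : ℝ) : ℝ :=
  if BddAbove {y : ℝ | 0 < rvTail Z y} then γ / sSup {y : ℝ | 0 < rvTail Z y} else 0

/-- Assumption 2: `Ḡ(b x) = o(H̄(x))` as `x → ∞` for every constant `b > 0`, where `G` is
the distribution of `Y` and `H` is the distribution of the product `X Y`. -/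
def Assumption2 {Ω : Type*} [MeasureSpace Ω] (X Y : Ω → ℝ) : Prop :=
  ∀ b > 0, (fun x => rvTail Y (b * x)) =o[atTop] fun x => rvTail (fun ω => X ω * Y ω) x

/-- Assumption 1: `K x y` is the conditional probability `P(X > x | Y = y)`, namely for
`y` in the support of `Y` it is the limit of `P(X > x | Y ∈ (y - δ, y + δ])` as `δ → 0+`,
and for `y` outside the support it is the unconditional probability `P(X > x)` (and then
`h y = 1`); `h : [0,∞) → (0,∞)` is a measurable function such that
`P(X > x | Y = y) ~ h(y) P(X > x)` as `x → ∞`, uniformly for `y ≥ 0`. -/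
def Assumption1 {Ω : Type*} [MeasureSpace Ω] (X Y : Ω → ℝ) (h : ℝ → ℝ) (K : ℝ → ℝ → ℝ) :
    Prop :=
  Measurable h ∧ (∀ y, 0 ≤ y → 0 < h y) ∧
    (∀ y, y ∉ distSupport Y → h y = 1 ∧ ∀ x, K x y = rvTail X x) ∧
    (∀ y ∈ distSupport Y, ∀ x : ℝ,
      Tendsto
        (fun δ : ℝ => (ℙ {ω | x < X ω ∧ Y ω ∈ Ioc (y - δ) (y + δ)}).toReal /
          (ℙ {ω | Y ω ∈ Ioc (y - δ) (y + δ)}).toReal)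
        (nhdsWithin 0 (Ioi 0)) (nhds (K x y))) ∧
    ∀ ε > 0, ∀ᶠ x in atTop, ∀ y, 0 ≤ y → |K x y / (h y * rvTail X x) - 1| < ε

/-- `(X, Y)` follows a Farlie–Gumbel–Morgenstern (FGM) distribution with parameter
`θ ∈ [-1, 1]`: `P(X > x, Y > y) = F̄(x) Ḡ(y) (1 + θ F(x) G(y))` for all `x` in the
support of `X` and `y` in the support of `Y`. -/
def FGM {Ω : Type*} [MeasureSpace Ω] (X Y : Ω → ℝ) (θ : ℝ) : Prop :=
  θ ∈ Icc (-1 : ℝ) 1 ∧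
    ∀ x ∈ distSupport X, ∀ y ∈ distSupport Y,
      (ℙ {ω | x < X ω ∧ y < Y ω}).toReal =
        rvTail X x * rvTail Y y * (1 + θ * rvCdf X x * rvCdf Y y)

/-- `(X, Y)` follows a bivariate Sarmanov distribution with kernels `φ₁, φ₂` and
parameter `θ`: the joint law has density `1 + θ φ₁(x) φ₂(y)` with respect to the product
of the marginal laws, where `φ₁, φ₂` are measurable, `E φ₁(X) = E φ₂(Y) = 0` and
`1 + θ φ₁(x) φ₂(y) ≥ 0`. -/
def Sarmanov {Ω : Type*} [MeasureSpace Ω] (X Y : Ω → ℝ) (φ₁ φ₂ : ℝ → ℝ) (θ : ℝ) : Prop :=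
  Measurable φ₁ ∧ Measurable φ₂ ∧
    Integrable (fun ω => φ₁ (X ω)) ℙ ∧ Integrable (fun ω => φ₂ (Y ω)) ℙ ∧
    (∫ ω, φ₁ (X ω)) = 0 ∧ (∫ ω, φ₂ (Y ω)) = 0 ∧
    (∀ x y : ℝ, 0 ≤ y → 0 ≤ 1 + θ * φ₁ x * φ₂ y) ∧
    Measure.map (fun ω => (X ω, Y ω)) ℙ =
      ((Measure.map X ℙ).prod (Measure.map Y ℙ)).withDensity
        (fun p => ENNReal.ofReal (1 + θ * φ₁ p.1 * φ₂ p.2))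

/-- The condition `ψ(y) = lim_{δ → 0+} (∫_{y-δ}^{y+δ} φ₂(v) G(dv)) / (G(y+δ) - G(y-δ))`
for all `y` in the support of `Y`. -/
def SarmanovPsi {Ω : Type*} [MeasureSpace Ω] (Y : Ω → ℝ) (φ₂ ψ : ℝ → ℝ) : Prop :=
  ∀ y ∈ distSupport Y,
    Tendsto
      (fun δ : ℝ => (∫ v in Ioc (y - δ) (y + δ), φ₂ v ∂(Measure.map Y ℙ)) /
        (rvCdf Y (y + δ) - rvCdf Y (y - δ)))
      (nhdsWithin 0 (Ioi 0)) (nhds (ψ y))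

/-!
Write `F̄`, `H̄` for the tails of `X`, `XY`, and `β` for the right endpoint of the law `G` of `Y`.
Conditioning on `Y` gives `H̄(x) = ∫ F̄(x / y) G(dy)`. By Assumption 2 the range `y > x / U`
contributes `o(H̄(x))` for every `U`, so only values of `F̄` beyond an arbitrarily large `U` matter,
and there the asymptotic relations satisfied by `F̄` hold uniformly in `y`.

For `L(γ / β)` this leaves `F̄((x - t) / y) ≈ e^{γt / y} F̄(x / y)`. Since `y ≤ β`, the factor is
at least `e^{γt / β}` when `t > 0`; conversely, values of `y` bounded away from `β` are negligible,
because `F̄(x / y)` is then exponentially smaller than for `y` near `β`. If `β = ∞` or `γ = 0` the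
limiting rate is `0` and only small `y` must be discarded. All cases are covered by describing
`γ / β` as the greatest `a` with `a Y ≤ γ` almost surely.

Within `L(γ)` and under a finite exponential moment, `S(γ)` is equivalent to the principle of a
single big jump: two independent summands with a large sum are unlikely to be both large. For two
independent copies `X₁ Y₁`, `X₂ Y₂` of `XY` one may assume `Y₂ ≤ Y₁` by symmetry. If `Y₂` is large,
which is unlikely, bound the sum by `(X₁ + X₂) Y₁` and use that the tail of `X₁ + X₂` is `O(F̄)`.
If `Y₂ ≤ B` and both products are large, then either `X₁` and `X₂` are both large, and their single
big jump applies, or `Y₁` is large and `X₂ > x / (2B)`; the latter two events are independent, and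
`F̄(x / (2B)) = O(H̄(x))`.
-/

open Topology

section Convolution

variable {M N : Type*} [Monoid M] [MeasurableSpace M] [MeasurableMul₂ M]
  [Monoid N] [MeasurableSpace N] [MeasurableMul₂ N]

lemma measurable_measureReal_map_mul_right (μ : Measure M) [SFinite μ] {s : Set M}
    (hs : MeasurableSet s) : Measurable fun y ↦ (μ.map (· * y)).real s := by
  simp only [Measure.real, Measure.map_apply (measurable_mul_const _) hs]
  exact (measurable_measure_prodMk_right (measurable_mul hs)).ennreal_toReal

@[to_additive]
lemma measureReal_mconv (μ ν : Measure M) [IsFiniteMeasure μ] [IsFiniteMeasure ν] {s : Set M}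
    (hs : MeasurableSet s) : (μ ∗ₘ ν).real s = ∫ y, (μ.map (· * y)).real s ∂ν := by
  have hsection : ∀ y, μ.map (· * y) s = μ ((·, y) ⁻¹' ((fun p : M × M ↦ p.1 * p.2) ⁻¹' s)) :=
    fun y ↦ Measure.map_apply (measurable_mul_const y) hs
  simp only [Measure.real, hsection]
  rw [integral_toReal (measurable_measure_prodMk_right (measurable_mul hs)).aemeasurable
    (.of_forall fun _ ↦ measure_lt_top _ _), ← Measure.prod_apply_symm (measurable_mul hs),
    Measure.mconv, Measure.map_apply measurable_mul hs]

lemma integrable_measureReal_map_mul_right (μ ν : Measure M) [IsFiniteMeasure μ]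
    [IsFiniteMeasure ν] {s : Set M} (hs : MeasurableSet s) :
    Integrable (fun y ↦ (μ.map (· * y)).real s) ν := by
  refine .of_bound (measurable_measureReal_map_mul_right μ hs).aestronglyMeasurable
    (μ.real univ) (.of_forall fun y ↦ ?_)
  rw [Real.norm_of_nonneg measureReal_nonneg, map_measureReal_apply (measurable_mul_const y) hs]
  exact measureReal_mono (subset_univ _)

instance measurableMul₂_prod : MeasurableMul₂ (M × N) :=
  ⟨by simp only [Prod.mul_def]; fun_prop⟩

lemma measurePreserving_prodProdProdComm {α β δ ε : Type*} [MeasurableSpace α] [MeasurableSpace β]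
    [MeasurableSpace δ] [MeasurableSpace ε] (μ : Measure α) (ν : Measure β) (μ' : Measure δ)
    (ν' : Measure ε) [SFinite μ] [SFinite ν] [SFinite μ'] [SFinite ν'] :
    MeasurePreserving (Equiv.prodProdProdComm α β δ ε)
      ((μ.prod ν).prod (μ'.prod ν')) ((μ.prod μ').prod (ν.prod ν')) := by
  have inner : MeasurePreserving _ (ν.prod (μ'.prod ν')) (μ'.prod (ν.prod ν')) :=
    (measurePreserving_prodAssoc μ' ν ν').comp ((Measure.measurePreserving_swap.prod
      (.id ν')).comp (measurePreserving_prodAssoc ν μ' ν').symm)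
  exact (measurePreserving_prodAssoc μ μ' (ν.prod ν')).symm.comp
    (((MeasurePreserving.id μ).prod inner).comp (measurePreserving_prodAssoc μ ν (μ'.prod ν')))

lemma mconv_prod_mconv (μ ν : Measure M) (μ' ν' : Measure N) [SFinite μ] [SFinite ν] [SFinite μ']
    [SFinite ν'] : (μ ∗ₘ ν).prod (μ' ∗ₘ ν') = (μ.prod μ') ∗ₘ (ν.prod ν') := by
  rw [Measure.mconv, Measure.mconv, Measure.map_prod_map _ _ measurable_mul measurable_mul,
    Measure.mconv, ← (measurePreserving_prodProdProdComm μ ν μ' ν').map_eq,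
    Measure.map_map measurable_mul (measurePreserving_prodProdProdComm μ ν μ' ν').measurable]
  rfl

lemma map_prod_mul_right (μ : Measure M) (μ' : Measure N) [SFinite μ] [SFinite μ'] (q : M × N) :
    (μ.prod μ').map (· * q) = (μ.map (· * q.1)).prod (μ'.map (· * q.2)) :=
  (Measure.map_prod_map _ _ (measurable_mul_const _) (measurable_mul_const _)).symm

end Convolution

/-- The tail (survival) function `x ↦ m (x, ∞)` of a measure on the line. -/
def upperTail (m : Measure ℝ) (x : ℝ) : ℝ := m.real (Ioi x)

section UpperTail

variable {m : Measure ℝ}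

lemma upperTail_nonneg (m : Measure ℝ) (x : ℝ) : 0 ≤ upperTail m x := measureReal_nonneg

lemma upperTail_le_one (m : Measure ℝ) [IsProbabilityMeasure m] (x : ℝ) : upperTail m x ≤ 1 :=
  measureReal_le_one

lemma antitone_upperTail (m : Measure ℝ) [IsFiniteMeasure m] : Antitone (upperTail m) :=
  fun _ _ h ↦ measureReal_mono (Ioi_subset_Ioi h)

lemma tendsto_upperTail_atTop (m : Measure ℝ) [IsFiniteMeasure m] :
    Tendsto (upperTail m) atTop (𝓝 0) := by
  have h := tendsto_measure_iInter_atTop (μ := m) (s := fun x : ℝ ↦ Ioi x)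
    (fun _ ↦ measurableSet_Ioi.nullMeasurableSet) (fun _ _ h ↦ Ioi_subset_Ioi h)
    ⟨0, measure_ne_top m _⟩
  have hempty : ⋂ x : ℝ, Ioi x = ∅ :=
    eq_empty_of_forall_notMem fun y hy ↦ lt_irrefl y (mem_iInter.1 hy y)
  rw [hempty, measure_empty] at h
  exact (ENNReal.tendsto_toReal ENNReal.zero_ne_top).comp h

lemma eventually_upperTail_le (m : Measure ℝ) [IsFiniteMeasure m] {ε : ℝ} (hε : 0 < ε) :
    ∀ᶠ x in atTop, upperTail m x ≤ ε :=
  (tendsto_upperTail_atTop m).eventually_le_const hε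

lemma eventually_upperTail_le_mul (m : Measure ℝ) [IsFiniteMeasure m] (a : ℝ) {ε : ℝ}
    (hε : 0 < ε) : ∀ᶠ x in atTop, upperTail m x ≤ ε * upperTail m a := by
  rcases (upperTail_nonneg m a).eq_or_lt with ha | ha
  · filter_upwards [eventually_ge_atTop a] with x hx
    rw [← ha, mul_zero, ha]
    exact antitone_upperTail m hx
  · exact eventually_upperTail_le m (mul_pos hε ha)

lemma upperTail_add (μ ν : Measure ℝ) [IsFiniteMeasure μ] [IsFiniteMeasure ν] (x : ℝ) :
    upperTail (μ + ν) x = upperTail μ x + upperTail ν x :=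
  measureReal_add_apply

lemma upperTail_map_mul_right {y : ℝ} (hy : 0 < y) (μ : Measure ℝ) (x : ℝ) :
    upperTail (μ.map (· * y)) x = upperTail μ (x / y) := by
  rw [upperTail, map_measureReal_apply (measurable_mul_const y) measurableSet_Ioi,
    preimage_mul_const_Ioi₀ x hy, upperTail]

lemma upperTail_map_mul_zero (μ : Measure ℝ) {x : ℝ} (hx : 0 ≤ x) :
    upperTail (μ.map (· * 0)) x = 0 := by
  rw [upperTail, map_measureReal_apply (measurable_mul_const 0) measurableSet_Ioi]
  simp [hx.not_gt]

lemma upperTail_map_add_right (μ : Measure ℝ) (x y : ℝ) :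
    upperTail (μ.map (· + y)) x = upperTail μ (x - y) := by
  rw [upperTail, map_measureReal_apply (measurable_add_const y) measurableSet_Ioi,
    preimage_add_const_Ioi, upperTail]

lemma upperTail_eq_zero_iff [IsFiniteMeasure m] {a : ℝ} :
    upperTail m a = 0 ↔ ∀ᵐ y ∂m, y ≤ a := by
  rw [upperTail, measureReal_eq_zero_iff, ae_iff]
  simp [Ioi_def]

lemma exists_gt_upperTail_pos [IsFiniteMeasure m] {a : ℝ} (ha : 0 < upperTail m a) :
    ∃ b > a, 0 < upperTail m b := by
  by_contra! h
  refine ha.ne' (upperTail_eq_zero_iff.2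
    ((ae_le_const_iff_forall_gt_measure_zero _ _).2 fun b hab ↦ ?_))
  obtain ⟨c, hac, hcb⟩ := exists_between hab
  have hc := upperTail_eq_zero_iff.1 ((h c hac).antisymm (upperTail_nonneg m c))
  exact measure_mono_null (fun y hy ↦ not_le.2 (hcb.trans_le hy)) (ae_iff.1 hc)

lemma upperTail_mconv (μ ν : Measure ℝ) [IsFiniteMeasure μ] [IsFiniteMeasure ν] (x : ℝ) :
    upperTail (μ ∗ₘ ν) x = ∫ y, upperTail (μ.map (· * y)) x ∂ν :=
  measureReal_mconv μ ν measurableSet_Ioi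

lemma upperTail_conv (μ ν : Measure ℝ) [IsFiniteMeasure μ] [IsFiniteMeasure ν] (x : ℝ) :
    upperTail (μ ∗ ν) x = ∫ y, upperTail μ (x - y) ∂ν := by
  rw [upperTail, measureReal_conv μ ν measurableSet_Ioi]
  exact integral_congr_ae (.of_forall fun y ↦ upperTail_map_add_right μ x y)

lemma integrable_upperTail_map_mul_right (μ ν : Measure ℝ) [IsFiniteMeasure μ] [IsFiniteMeasure ν]
    (x : ℝ) : Integrable (fun y ↦ upperTail (μ.map (· * y)) x) ν :=
  integrable_measureReal_map_mul_right μ ν measurableSet_Ioi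

lemma upperTail_mul_upperTail_le_mconv (μ ν : Measure ℝ) [IsFiniteMeasure μ] [IsFiniteMeasure ν]
    {b x : ℝ} (hb : 0 < b) (hx : 0 ≤ x) :
    upperTail μ (x / b) * upperTail ν b ≤ upperTail (μ ∗ₘ ν) x := by
  rw [upperTail, upperTail, ← measureReal_prod_prod, upperTail, Measure.mconv,
    map_measureReal_apply measurable_mul measurableSet_Ioi]
  refine measureReal_mono fun p ⟨hp₁, hp₂⟩ ↦ ?_
  calc x = x / b * b := (div_mul_cancel₀ x hb.ne').symm
    _ < p.1 * p.2 := mul_lt_mul'' hp₁ hp₂ (by positivity) hb.le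

end UpperTail

lemma isEquivalent_const_mul_iff_tendsto_div {ι : Type*} {l : Filter ι} {u v : ι → ℝ} {c : ℝ}
    (hc : c ≠ 0) (hv : ∀ x, v x ≠ 0) :
    (u ~[l] fun x ↦ c * v x) ↔ Tendsto (fun x ↦ u x / v x) l (𝓝 c) := by
  rw [isEquivalent_iff_tendsto_one (.of_forall fun x ↦ mul_ne_zero hc (hv x))]
  have hdiv : u / (fun x ↦ c * v x) = fun x ↦ u x / v x / c := by
    ext x; simp only [Pi.div_apply, div_div, mul_comm]
  rw [hdiv]
  refine ⟨fun h ↦ ?_, fun h ↦ by simpa only [div_self hc] using h.div_const c⟩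
  simpa only [div_mul_cancel₀ _ hc, one_mul] using h.mul_const c

lemma eventually_le_mul_of_isLittleO {ι : Type*} {l : Filter ι} {u v : ι → ℝ} (h : u =o[l] v)
    (hv : ∀ x, 0 ≤ v x) {ε : ℝ} (hε : 0 < ε) : ∀ᶠ x in l, u x ≤ ε * v x := by
  filter_upwards [h.bound hε] with x hx
  rw [Real.norm_of_nonneg (hv x)] at hx
  exact (Real.le_norm_self _).trans hx

/-- The class `L(γ)` for the law `m` of a random variable: the tail never vanishes, and moving its
argument by `-t` multiplies it asymptotically by `e^{γt}`. Unlike in the usual definition, `t` may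
be negative, see `MemClassL.of_pos`. -/
structure MemClassL (m : Measure ℝ) (γ : ℝ) : Prop where
  tail_pos : ∀ x, 0 < upperTail m x
  tendsto_div : ∀ t, Tendsto (fun x ↦ upperTail m (x - t) / upperTail m x) atTop
    (𝓝 (Real.exp (γ * t)))

namespace MemClassL

variable {m : Measure ℝ} {γ : ℝ}

lemma of_pos (hpos : ∀ x, 0 < upperTail m x)
    (h : ∀ t > 0, Tendsto (fun x ↦ upperTail m (x - t) / upperTail m x) atTop
      (𝓝 (Real.exp (γ * t)))) : MemClassL m γ := by
  refine ⟨hpos, fun t ↦ ?_⟩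
  rcases lt_trichotomy t 0 with ht | rfl | ht
  · have hinv := ((h (-t) (neg_pos.2 ht)).comp
      (tendsto_atTop_add_const_right atTop (-t) tendsto_id)).inv₀ (Real.exp_pos _).ne'
    rw [← Real.exp_neg, mul_neg, neg_neg] at hinv
    refine hinv.congr fun x ↦ ?_
    simp only [Function.comp_apply, id, inv_div, sub_neg_eq_add, ← sub_eq_add_neg,
      sub_add_cancel]
  · simp [div_self (hpos _).ne']
  · exact h t ht

lemma eventually_le_mul (h : MemClassL m γ) (t : ℝ) {c : ℝ} (hc : Real.exp (γ * t) < c) :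
    ∀ᶠ x in atTop, upperTail m (x - t) ≤ c * upperTail m x := by
  filter_upwards [(h.tendsto_div t).eventually_le_const hc] with x hx
  exact (div_le_iff₀ (h.tail_pos x)).1 hx

lemma of_eventually_le_mul (hpos : ∀ x, 0 < upperTail m x)
    (h : ∀ t c, Real.exp (γ * t) < c → ∀ᶠ x in atTop, upperTail m (x - t) ≤ c * upperTail m x) :
    MemClassL m γ := by
  refine ⟨hpos, fun t ↦ tendsto_order.2 ⟨fun a ha ↦ ?_, fun a ha ↦ ?_⟩⟩
  · rcases le_or_gt a 0 with ha₀ | ha₀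
    · exact .of_forall fun x ↦ ha₀.trans_lt (div_pos (hpos _) (hpos _))
    obtain ⟨b, hab, hb⟩ := exists_between ha
    have hb₀ : 0 < b := ha₀.trans hab
    have hinv : Real.exp (γ * -t) < b⁻¹ := by
      rwa [mul_neg, Real.exp_neg, inv_lt_inv₀ (Real.exp_pos _) hb₀]
    filter_upwards [(tendsto_atTop_add_const_right atTop (-t) tendsto_id).eventually
      (h (-t) _ hinv)] with x hx
    rw [id, sub_neg_eq_add, neg_add_cancel_right, ← sub_eq_add_neg, ← div_eq_inv_mul,
      le_div_iff₀ hb₀] at hx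
    rw [lt_div_iff₀ (hpos x)]
    nlinarith [hpos x]
  · obtain ⟨c, hc, hca⟩ := exists_between ha
    filter_upwards [h t c hc] with x hx
    exact ((div_le_iff₀ (hpos x)).2 hx).trans_lt hca

lemma eventually_comp_le_mul [IsFiniteMeasure m] (h : MemClassL m γ) (hγ : 0 < γ) {ι : Type*}
    {l : Filter ι} {f g : ι → ℝ} (hg : Tendsto g l atTop)
    (hfg : Tendsto (fun i ↦ f i - g i) l atTop) {ε : ℝ} (hε : 0 < ε) :
    ∀ᶠ i in l, upperTail m (f i) ≤ ε * upperTail m (g i) := by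
  have hexp : Tendsto (fun s ↦ Real.exp (γ * -s)) atTop (𝓝 0) :=
    Real.tendsto_exp_atBot.comp (tendsto_neg_atTop_atBot.const_mul_atBot hγ)
  obtain ⟨s, hs⟩ := (hexp.eventually_lt_const hε).exists
  filter_upwards [hg.eventually (h.eventually_le_mul (-s) hs), hfg.eventually_ge_atTop s]
    with i hi hsi
  exact (antitone_upperTail m (by linarith)).trans hi

end MemClassL

/-- The mass that the law `μ × μ'` of an independent pair gives to the event that both summands
exceed `K` and their sum exceeds `x`. -/
def jointTail (μ μ' : Measure ℝ) (K x : ℝ) : ℝ :=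
  (μ.prod μ').real {p | K < p.1 ∧ K < p.2 ∧ x < p.1 + p.2}

/-- The principle of a single big jump for the law `m`: a large sum of two independent summands
is, up to a negligible probability, not due to two moderately large summands. -/
def SingleBigJump (m : Measure ℝ) : Prop :=
  ∀ ε > 0, ∀ᶠ K in atTop, ∀ᶠ x in atTop, jointTail m m K x ≤ ε * upperTail m x

/-- The class `S(γ)` for the law `m` of a random variable. -/
structure MemClassS (m : Measure ℝ) (γ : ℝ) : Prop where
  memClassL : MemClassL m γ
  integrable_exp : Integrable (fun y ↦ Real.exp (γ * y)) m
  tendsto_conv_div : Tendsto (fun x ↦ upperTail (m ∗ m) x / upperTail m x) atTop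
    (𝓝 (2 * ∫ y, Real.exp (γ * y) ∂m))

section JointTail

variable {m : Measure ℝ} {K x : ℝ}

lemma measurableSet_jointTail (K x : ℝ) :
    MeasurableSet {p : ℝ × ℝ | K < p.1 ∧ K < p.2 ∧ x < p.1 + p.2} := by
  measurability

lemma jointTail_nonneg (μ μ' : Measure ℝ) (K x : ℝ) : 0 ≤ jointTail μ μ' K x := measureReal_nonneg

lemma jointTail_comm (μ μ' : Measure ℝ) [SFinite μ] [SFinite μ'] (K x : ℝ) :
    jointTail μ μ' K x = jointTail μ' μ K x := by
  rw [jointTail, ← (Measure.measurePreserving_swap (μ := μ') (ν := μ)).measureReal_preimage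
    (measurableSet_jointTail K x).nullMeasurableSet, jointTail]
  congr 1
  ext p
  simp only [mem_preimage, mem_ofPred_eq, Prod.fst_swap, Prod.snd_swap, add_comm p.2]
  tauto

lemma jointTail_eq_upperTail_conv (μ μ' : Measure ℝ) [SFinite μ] [SFinite μ'] (K x : ℝ) :
    jointTail μ μ' K x = upperTail (μ.restrict (Ioi K) ∗ μ'.restrict (Ioi K)) x := by
  rw [upperTail, Measure.conv, map_measureReal_apply measurable_add measurableSet_Ioi,
    Measure.prod_restrict, measureReal_restrict_apply (measurable_add measurableSet_Ioi), jointTail]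
  congr 1
  ext p
  simp only [mem_inter_iff, mem_preimage, mem_Ioi, mem_prod, mem_ofPred_eq]
  tauto

lemma upperTail_conv_self_eq [IsFiniteMeasure m] (hx : 2 * K ≤ x) :
    upperTail (m ∗ m) x = 2 * upperTail (m ∗ m.restrict (Iic K)) x + jointTail m m K x := by
  set A := m.restrict (Iic K)
  set B := m.restrict (Ioi K)
  have hAB : A + B = m := by
    rw [show B = m.restrict (Iic K)ᶜ by rw [compl_Iic],
      Measure.restrict_add_restrict_compl measurableSet_Iic]
  have hsplit (ρ : Measure ℝ) [IsFiniteMeasure ρ] :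
      upperTail (ρ ∗ m) x = upperTail (ρ ∗ A) x + upperTail (ρ ∗ B) x := by
    rw [← upperTail_add, ← Measure.conv_add, hAB]
  have hAA : upperTail (A ∗ A) x = 0 := by
    rw [upperTail_conv]
    refine setIntegral_eq_zero_of_forall_eq_zero fun z hz ↦ upperTail_eq_zero_iff.2
      ((ae_restrict_iff' measurableSet_Iic).2 (.of_forall fun y hy ↦ ?_))
    linarith [mem_Iic.1 hy, mem_Iic.1 hz]
  have hm := hsplit m
  have hB := hsplit B
  have hA := hsplit A
  rw [Measure.conv_comm B m, Measure.conv_comm B A] at hB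
  rw [Measure.conv_comm A m, hAA] at hA
  rw [jointTail_eq_upperTail_conv]
  linarith

lemma tendsto_upperTail_conv_restrict_div [IsFiniteMeasure m] {γ : ℝ} (h : MemClassL m γ) (K : ℝ) :
    Tendsto (fun x ↦ upperTail (m ∗ m.restrict (Iic K)) x / upperTail m x) atTop
      (𝓝 (∫ z in Iic K, Real.exp (γ * z) ∂m)) := by
  have hdiv : ∀ x, upperTail (m ∗ m.restrict (Iic K)) x / upperTail m x =
      ∫ z in Iic K, upperTail m (x - z) / upperTail m x ∂m := fun x ↦ by
    rw [upperTail_conv, integral_div]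
  simp_rw [hdiv]
  refine tendsto_integral_filter_of_dominated_convergence (fun _ ↦ Real.exp (γ * K) + 1)
    (.of_forall fun x ↦ ?_) ?_ (integrable_const _) (.of_forall h.tendsto_div)
  · exact (((antitone_upperTail m).measurable.comp (measurable_const_sub x)).div_const
      _).aestronglyMeasurable
  · filter_upwards [h.eventually_le_mul K (lt_add_one _)] with x hx
    refine (ae_restrict_iff' measurableSet_Iic).2 (.of_forall fun z hz ↦ ?_)
    rw [Real.norm_of_nonneg (div_nonneg (upperTail_nonneg _ _) (upperTail_nonneg _ _)),
      div_le_iff₀ (h.tail_pos x)]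
    exact (antitone_upperTail m (sub_le_sub_left (mem_Iic.1 hz) x)).trans hx

lemma tendsto_setIntegral_Iic_exp {γ : ℝ} (hi : Integrable (fun y ↦ Real.exp (γ * y)) m) :
    Tendsto (fun K ↦ ∫ z in Iic K, Real.exp (γ * z) ∂m) atTop
      (𝓝 (∫ z, Real.exp (γ * z) ∂m)) :=
  (aecover_Iic tendsto_id).integral_tendsto_of_countably_generated hi

lemma MemClassS.singleBigJump [IsFiniteMeasure m] {γ : ℝ} (h : MemClassS m γ) :
    SingleBigJump m := by
  intro ε hε
  filter_upwards [(tendsto_setIntegral_Iic_exp h.integrable_exp).eventually_const_lt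
    (sub_lt_self _ (half_pos hε))] with K hK
  have hlim := h.tendsto_conv_div.sub
    ((tendsto_upperTail_conv_restrict_div h.memClassL K).const_mul 2)
  filter_upwards [hlim.eventually_le_const (show _ < ε by linarith),
    eventually_ge_atTop (2 * K)] with x hx hKx
  rw [upperTail_conv_self_eq hKx, ← mul_div_assoc, ← sub_div, add_sub_cancel_left,
    div_le_iff₀ (h.memClassL.tail_pos x)] at hx
  exact hx

lemma MemClassS.of_singleBigJump [IsFiniteMeasure m] {γ : ℝ} (hL : MemClassL m γ)
    (hi : Integrable (fun y ↦ Real.exp (γ * y)) m) (hm : SingleBigJump m) : MemClassS m γ := by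
  refine ⟨hL, hi, Metric.tendsto_nhds.2 fun ε hε ↦ ?_⟩
  obtain ⟨K, hjump, hK⟩ := ((hm (ε / 3) (by positivity)).and
    (Metric.tendsto_nhds.1 (tendsto_setIntegral_Iic_exp hi) (ε / 6) (by positivity))).exists
  filter_upwards [hjump, Metric.tendsto_nhds.1 (tendsto_upperTail_conv_restrict_div hL K) (ε / 6)
    (by positivity), eventually_ge_atTop (2 * K)] with x hjump hx hKx
  rw [← div_le_iff₀ (hL.tail_pos x)] at hjump
  have hnonneg : 0 ≤ jointTail m m K x / upperTail m x :=
    div_nonneg (jointTail_nonneg ..) (upperTail_nonneg ..)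
  rw [upperTail_conv_self_eq hKx, add_div, mul_div_assoc]
  rw [Real.dist_eq, abs_lt] at *
  constructor <;> linarith [hK.1, hK.2, hx.1, hx.2]

end JointTail

section ProductClassL

variable {μ ν : Measure ℝ} {γ α : ℝ}

lemma exists_measureReal_Ioc_le (ν : Measure ℝ) [IsFiniteMeasure ν] (x : ℝ) {δ ε : ℝ} (hδ : 0 < δ)
    (hε : 0 < ε) : ∃ y ∈ Ioc x (x + δ), ν.real (Ioc x y) ≤ ε := by
  have hlim := tendsto_measure_biInter_gt (μ := ν) (s := Ioc x) (a := x)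
    (fun _ _ ↦ measurableSet_Ioc.nullMeasurableSet) (fun _ _ _ h ↦ Ioc_subset_Ioc_right h)
    ⟨x + δ, by linarith, measure_ne_top _ _⟩
  have hempty : ⋂ r > x, Ioc x r = ∅ := eq_empty_of_forall_notMem fun y hy ↦ by
    have hxy : x < y := (mem_iInter₂.1 hy (x + 1) (lt_add_one x)).1
    obtain ⟨r, hxr, hry⟩ := exists_between hxy
    exact hry.not_ge (mem_iInter₂.1 hy r hxr).2
  rw [hempty, measure_empty] at hlim
  obtain ⟨y, hy, hmem⟩ := ((((ENNReal.tendsto_toReal ENNReal.zero_ne_top).comp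
    hlim).eventually_le_const hε).and (Ioc_mem_nhdsGT (lt_add_of_pos_right x hδ))).exists
  exact ⟨y, hmem, hy⟩

lemma MemClassL.exists_cutoff [IsFiniteMeasure μ] [IsProbabilityMeasure ν] (hμ : MemClassL μ γ)
    (hγ : 0 ≤ γ) {a' b ε : ℝ} (hb : 0 < b) (hγb : γ < a' * b) (hε : 0 < ε) (t : ℝ) :
    ∃ a > 0, γ ≤ a' * a ∧
      ∀ᶠ x in atTop, upperTail μ ((x - t) / a) * ν.real (Ioc 0 a) ≤ ε * upperTail μ (x / b) := by
  have ha' : 0 < a' := pos_of_mul_pos_left (hγ.trans_lt hγb) hb.le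
  -- For `γ = 0` the two tails of `μ` are of the same order, and the gain is that `ν` gives little
  -- mass to `(0, a]`; for `γ > 0` the gain is exponential, because `γ / a' < b`.
  rcases hγ.eq_or_lt with rfl | hγ
  · obtain ⟨a, ⟨ha, hab⟩, hsmall⟩ := exists_measureReal_Ioc_le ν 0 (half_pos hb) hε
    refine ⟨a, ha, by positivity, ?_⟩
    filter_upwards [eventually_ge_atTop (2 * t), eventually_ge_atTop 0] with x hxt hx
    have hle : x / b ≤ (x - t) / a := by
      rw [div_le_div_iff₀ hb ha]
      nlinarith
    rw [mul_comm]
    exact mul_le_mul hsmall (antitone_upperTail μ hle) (upperTail_nonneg ..) hε.le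
  · have ha : 0 < γ / a' := div_pos hγ ha'
    have hab : 0 < 1 / (γ / a') - 1 / b :=
      sub_pos.2 (one_div_lt_one_div_of_lt ha ((div_lt_iff₀' ha').2 hγb))
    refine ⟨γ / a', ha, (mul_div_cancel₀ _ ha'.ne').ge, ?_⟩
    have hdiff : Tendsto (fun x ↦ (x - t) / (γ / a') - x / b) atTop atTop := by
      refine (tendsto_atTop_add_const_right _ (-t / (γ / a'))
        (tendsto_id.atTop_mul_const hab)).congr fun x ↦ ?_
      simp only [id]; ring
    filter_upwards [hμ.eventually_comp_le_mul hγ (tendsto_id.atTop_div_const hb) hdiff hε] with x hx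
    exact (mul_le_of_le_one_right (upperTail_nonneg ..) measureReal_le_one).trans hx

lemma upperTail_map_mul_right_sub_le [IsProbabilityMeasure μ] {a c t U x y : ℝ} (ha : 0 < a)
    (hU : 0 < U) (hc : 0 ≤ c) (ht : 0 ≤ t) (htx : t < x) (hy : 0 ≤ y)
    (hshift : ∀ u ≥ U, upperTail μ (u - t / a) ≤ c * upperTail μ u) :
    upperTail (μ.map (· * y)) (x - t) ≤
      (Ioc 0 a).indicator (fun _ ↦ upperTail μ ((x - t) / a)) y +
        c * upperTail (μ.map (· * y)) x + (Ioi (x / U)).indicator 1 y := by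
  have hsmall := indicator_nonneg (s := Ioc 0 a) (fun _ _ ↦ upperTail_nonneg μ ((x - t) / a)) y
  have hmain := mul_nonneg hc (upperTail_nonneg (μ.map (· * y)) x)
  have hlarge : 0 ≤ (Ioi (x / U)).indicator (1 : ℝ → ℝ) y :=
    indicator_nonneg (fun _ _ ↦ zero_le_one) y
  rcases hy.eq_or_lt with rfl | hy
  · rw [upperTail_map_mul_zero μ (sub_pos.2 htx).le]
    positivity
  simp only [upperTail_map_mul_right hy] at hmain ⊢
  rcases le_or_gt y a with hya | hya
  · rw [indicator_of_mem (mem_Ioc.2 ⟨hy, hya⟩)]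
    have := antitone_upperTail μ (div_le_div_of_nonneg_left (sub_pos.2 htx).le hy hya)
    linarith
  rcases lt_or_ge (x / U) y with hyU | hyU
  · rw [indicator_of_mem (mem_Ioi.2 hyU), Pi.one_apply]
    linarith [upperTail_le_one μ ((x - t) / y)]
  · have hshift' := hshift (x / y) ((le_div_comm₀ hU hy).2 hyU)
    have hle : x / y - t / a ≤ (x - t) / y := by
      rw [sub_div]
      exact sub_le_sub_left (div_le_div_of_nonneg_left ht ha hya.le) _
    linarith [antitone_upperTail μ hle]

lemma upperTail_mconv_sub_le [IsProbabilityMeasure μ] [IsFiniteMeasure ν] (hν : ∀ᵐ y ∂ν, 0 ≤ y)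
    {a c t U x : ℝ} (ha : 0 < a) (hU : 0 < U) (hc : 0 ≤ c) (ht : 0 ≤ t) (htx : t < x)
    (hshift : ∀ u ≥ U, upperTail μ (u - t / a) ≤ c * upperTail μ u) :
    upperTail (μ ∗ₘ ν) (x - t) ≤ upperTail μ ((x - t) / a) * ν.real (Ioc 0 a) +
      c * upperTail (μ ∗ₘ ν) x + upperTail ν (x / U) := by
  set small := (Ioc 0 a).indicator fun _ ↦ upperTail μ ((x - t) / a)
  set large : ℝ → ℝ := (Ioi (x / U)).indicator 1
  have hint := integrable_upperTail_map_mul_right μ ν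
  have hint_small : Integrable small ν := (integrable_const _).indicator measurableSet_Ioc
  have hint_large : Integrable large ν := (integrable_const _).indicator measurableSet_Ioi
  have hint_main : Integrable (fun y ↦ small y + c * upperTail (μ.map (· * y)) x) ν :=
    hint_small.add ((hint x).const_mul c)
  calc upperTail (μ ∗ₘ ν) (x - t) = ∫ y, upperTail (μ.map (· * y)) (x - t) ∂ν :=
        upperTail_mconv ..
    _ ≤ ∫ y, (small y + c * upperTail (μ.map (· * y)) x + large y) ∂ν :=
        integral_mono_ae (hint _) (hint_main.add hint_large)
          (hν.mono fun y hy ↦ upperTail_map_mul_right_sub_le ha hU hc ht htx hy hshift)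
    _ = ∫ y, small y ∂ν + c * ∫ y, upperTail (μ.map (· * y)) x ∂ν + ∫ y, large y ∂ν := by
        rw [integral_add hint_main hint_large, integral_add hint_small ((hint x).const_mul c),
          integral_const_mul]
    _ = _ := by
        rw [integral_indicator_const _ measurableSet_Ioc, integral_indicator_one measurableSet_Ioi,
          ← upperTail_mconv, smul_eq_mul, mul_comm (ν.real _)]
        rfl

lemma nonneg_of_mem_upperBounds_slopes (hγ : 0 ≤ γ)
    (hα : α ∈ upperBounds {a | ∀ᵐ y ∂ν, a * y ≤ γ}) : 0 ≤ α :=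
  hα (by simp [hγ])

lemma MemClassL.eventually_upperTail_mconv_sub_le [IsProbabilityMeasure μ] [IsProbabilityMeasure ν]
    (hμ : MemClassL μ γ) (hγ : 0 ≤ γ) (hν : ∀ᵐ y ∂ν, 0 ≤ y)
    (hA : ∀ b > 0, (fun x ↦ upperTail ν (b * x)) =o[atTop] upperTail (μ ∗ₘ ν))
    (hα : α ∈ upperBounds {a | ∀ᵐ y ∂ν, a * y ≤ γ}) {t c : ℝ} (ht : 0 ≤ t)
    (hc : Real.exp (α * t) < c) :
    ∀ᶠ x in atTop, upperTail (μ ∗ₘ ν) (x - t) ≤ c * upperTail (μ ∗ₘ ν) x := by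
  have hα₀ : 0 ≤ α := nonneg_of_mem_upperBounds_slopes hγ hα
  obtain ⟨a', hαa', ha'c⟩ : ∃ a' > α, Real.exp (a' * t) < c :=
    (((by fun_prop : Continuous fun a' ↦ Real.exp (a' * t)).tendsto α).eventually_lt_const
      hc).exists_gt
  have ha' : 0 < a' := hα₀.trans_lt hαa'
  have hγa' : 0 < upperTail ν (γ / a') := by
    refine (upperTail_nonneg ..).lt_of_ne' fun h ↦ hαa'.not_ge (hα ?_)
    exact (upperTail_eq_zero_iff.1 h).mono fun y hy ↦ (le_div_iff₀' ha').1 hy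
  obtain ⟨b, hγb, hb⟩ := exists_gt_upperTail_pos hγa'
  have hb₀ : 0 < b := (div_nonneg hγ ha'.le).trans_lt hγb
  obtain ⟨c', hc', hc'c⟩ := exists_between ha'c
  have hδ : 0 < (c - c') / 2 := half_pos (sub_pos.2 hc'c)
  obtain ⟨a, ha, hγa, hcut⟩ :=
    hμ.exists_cutoff (ν := ν) hγ hb₀ ((div_lt_iff₀' ha').1 hγb) (mul_pos hδ hb) t
  have hexp : Real.exp (γ * (t / a)) < c' := by
    refine (Real.exp_le_exp.2 ?_).trans_lt hc'
    rw [← mul_div_assoc, div_le_iff₀ ha]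
    nlinarith
  obtain ⟨U, hU, hshift⟩ := ((eventually_gt_atTop (0 : ℝ)).and
    (eventually_forall_ge_atTop.2 (hμ.eventually_le_mul _ hexp))).exists
  filter_upwards [hcut, eventually_gt_atTop t, eventually_le_mul_of_isLittleO
    (hA U⁻¹ (inv_pos.2 hU)) (upperTail_nonneg _) hδ] with x hcut htx hνx
  rw [← div_eq_inv_mul] at hνx
  have hsub := upperTail_mconv_sub_le hν ha hU ((Real.exp_pos _).trans hc').le ht htx hshift
  have hlower := mul_le_mul_of_nonneg_left
    (upperTail_mul_upperTail_le_mconv μ ν hb₀ (ht.trans htx.le)) hδ.le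
  linarith

lemma MemClassL.eventually_upperTail_mconv_add_le [IsFiniteMeasure μ] [IsFiniteMeasure ν]
    (hμ : MemClassL μ γ) (hν : ∀ᵐ y ∂ν, 0 ≤ y) (hν₀ : 0 < upperTail ν 0) (hα₀ : 0 ≤ α)
    (hα : ∀ᵐ y ∂ν, α * y ≤ γ) {s c : ℝ} (hs : 0 ≤ s) (hc : Real.exp (-(α * s)) < c) :
    ∀ᶠ x in atTop, upperTail (μ ∗ₘ ν) (x + s) ≤ c * upperTail (μ ∗ₘ ν) x := by
  rcases hα₀.eq_or_lt with rfl | hα₀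
  · refine .of_forall fun x ↦ (antitone_upperTail _ (le_add_of_nonneg_right hs)).trans
      (le_mul_of_one_le_left (upperTail_nonneg ..) ?_)
    simpa using hc.le
  have hγ : 0 < γ := by
    by_contra! hγ
    exact hν₀.ne' (upperTail_eq_zero_iff.2 (hα.mono fun y hy ↦ by nlinarith))
  have hexp : Real.exp (γ * -(α * s / γ)) < c := by rwa [mul_neg, mul_div_cancel₀ _ hγ.ne']
  obtain ⟨U, hU, hshift⟩ := ((eventually_gt_atTop (0 : ℝ)).and
    (eventually_forall_ge_atTop.2 (hμ.eventually_le_mul _ hexp))).exists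
  filter_upwards [eventually_ge_atTop 0, eventually_ge_atTop (U * (γ / α))] with x hx hUx
  rw [upperTail_mconv, upperTail_mconv, ← integral_const_mul]
  refine integral_mono_ae (integrable_upperTail_map_mul_right ..)
    ((integrable_upperTail_map_mul_right ..).const_mul c) ?_
  filter_upwards [hν, hα] with y hy hαy
  rcases hy.eq_or_lt with rfl | hy
  · rw [upperTail_map_mul_zero μ (by positivity), upperTail_map_mul_zero μ hx, mul_zero]
  rw [upperTail_map_mul_right hy, upperTail_map_mul_right hy]
  have hUy : U ≤ x / y := by
    rw [le_div_iff₀ hy]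
    exact (mul_le_mul_of_nonneg_left ((le_div_iff₀' hα₀).2 hαy) hU.le).trans hUx
  have hsy : α * s / γ ≤ s / y := by
    rw [div_le_div_iff₀ hγ hy]
    nlinarith
  refine (antitone_upperTail μ ?_).trans (hshift _ hUy)
  rw [add_div, sub_neg_eq_add]
  exact add_le_add_right hsy _

theorem MemClassL.mconv [IsProbabilityMeasure μ] [IsProbabilityMeasure ν] (hμ : MemClassL μ γ)
    (hγ : 0 ≤ γ) (hν : ∀ᵐ y ∂ν, 0 ≤ y)
    (hA : ∀ b > 0, (fun x ↦ upperTail ν (b * x)) =o[atTop] upperTail (μ ∗ₘ ν))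
    (hα : IsGreatest {a | ∀ᵐ y ∂ν, a * y ≤ γ} α) : MemClassL (μ ∗ₘ ν) α := by
  have hα₀ : 0 ≤ α := nonneg_of_mem_upperBounds_slopes hγ hα.2
  have hν₀ : 0 < upperTail ν 0 := by
    refine (upperTail_nonneg ..).lt_of_ne' fun h ↦ (lt_add_one α).not_ge (hα.2 ?_)
    filter_upwards [upperTail_eq_zero_iff.1 h] with y hy
    nlinarith
  obtain ⟨b, hb, hνb⟩ := exists_gt_upperTail_pos hν₀
  have hpos : ∀ x, 0 < upperTail (μ ∗ₘ ν) x := fun x ↦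
    (mul_pos (hμ.tail_pos _) hνb).trans_le ((upperTail_mul_upperTail_le_mconv μ ν hb
      (le_max_right x 0)).trans (antitone_upperTail _ (le_max_left x 0)))
  refine .of_eventually_le_mul hpos fun t c hc ↦ ?_
  rcases le_total 0 t with ht | ht
  · exact hμ.eventually_upperTail_mconv_sub_le hγ hν hA hα.2 ht hc
  · simpa only [sub_eq_add_neg] using hμ.eventually_upperTail_mconv_add_le hν hν₀ hα₀ hα.1
      (neg_nonneg.2 ht) (by rwa [mul_neg, neg_neg])

end ProductClassL

lemma integral_prod_self_le_two_mul {α : Type*} [LinearOrder α] [MeasurableSpace α]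
    {ν : Measure α} [SFinite ν] {f g : α × α → ℝ} (hf : Integrable f (ν.prod ν))
    (hg : Integrable g (ν.prod ν)) (hf_swap : ∀ p, f p.swap = f p) (hg₀ : 0 ≤ᵐ[ν.prod ν] g)
    (hfg : ∀ᵐ p ∂ν.prod ν, p.2 ≤ p.1 → f p ≤ g p) :
    ∫ p, f p ∂ν.prod ν ≤ 2 * ∫ p, g p ∂ν.prod ν := by
  have hswap : Tendsto Prod.swap (ae (ν.prod ν)) (ae (ν.prod ν)) :=
    Measure.measurePreserving_swap.quasiMeasurePreserving.tendsto_ae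
  calc ∫ p, f p ∂ν.prod ν ≤ ∫ p, (g p + g p.swap) ∂ν.prod ν := by
        refine integral_mono_ae hf (hg.add hg.swap) ?_
        filter_upwards [hfg, hswap.eventually hfg, hg₀, hswap.eventually hg₀] with p h h' h₀ h₀'
        rcases le_total p.2 p.1 with hp | hp
        · exact (h hp).trans (le_add_of_nonneg_right h₀')
        · exact (hf_swap p).symm.trans_le ((h' hp).trans (le_add_of_nonneg_left h₀))
    _ = 2 * ∫ p, g p ∂ν.prod ν := by
        have hg_swap : Integrable (fun p ↦ g p.swap) (ν.prod ν) := hg.swap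
        rw [integral_add hg hg_swap, integral_prod_swap, two_mul]

lemma integral_prod_mul_add_fst {α β : Type*} [MeasurableSpace α] [MeasurableSpace β]
    {μ : Measure α} {ν : Measure β} [SFinite μ] [IsProbabilityMeasure ν] {f h : α → ℝ} {g : β → ℝ}
    (hf : Integrable f μ) (hg : Integrable g ν) (hh : Integrable h μ) :
    ∫ p, (f p.1 * g p.2 + h p.1) ∂μ.prod ν = (∫ a, f a ∂μ) * ∫ b, g b ∂ν + ∫ a, h a ∂μ := by
  rw [integral_add (hf.mul_prod hg) (hh.comp_fst ν), integral_prod_mul, integral_fun_fst,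
    probReal_univ, one_smul]

section ProductSingleBigJump

variable {μ ν : Measure ℝ} {b c B C K M U x η : ℝ}

lemma jointTail_mconv_self (μ ν : Measure ℝ) [IsFiniteMeasure μ] [IsFiniteMeasure ν] (K x : ℝ) :
    jointTail (μ ∗ₘ ν) (μ ∗ₘ ν) K x =
      ∫ q, jointTail (μ.map (· * q.1)) (μ.map (· * q.2)) K x ∂ν.prod ν := by
  rw [jointTail, mconv_prod_mconv, measureReal_mconv _ _ (measurableSet_jointTail K x)]
  simp only [map_prod_mul_right, jointTail]

lemma integrable_jointTail_map_mul_right (μ ν : Measure ℝ) [IsFiniteMeasure μ] [IsFiniteMeasure ν]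
    (K x : ℝ) :
    Integrable (fun q : ℝ × ℝ ↦ jointTail (μ.map (· * q.1)) (μ.map (· * q.2)) K x)
      (ν.prod ν) := by
  simpa only [map_prod_mul_right, jointTail] using
    integrable_measureReal_map_mul_right (μ.prod μ) (ν.prod ν) (measurableSet_jointTail K x)

lemma jointTail_map_mul_right (μ μ' : Measure ℝ) [SFinite μ] [SFinite μ'] (b c K x : ℝ) :
    jointTail (μ.map (· * b)) (μ'.map (· * c)) K x =
      (μ.prod μ').real {p | K < p.1 * b ∧ K < p.2 * c ∧ x < p.1 * b + p.2 * c} := by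
  rw [jointTail, ← map_prod_mul_right μ μ' (b, c),
    map_measureReal_apply (measurable_mul_const _) (measurableSet_jointTail K x)]
  rfl

lemma jointTail_map_mul_right_le_upperTail_conv [IsFiniteMeasure μ] (hc : 0 ≤ c) (hcb : c ≤ b)
    (hb : 0 < b) (hK : 0 ≤ K) :
    jointTail (μ.map (· * b)) (μ.map (· * c)) K x ≤ upperTail (μ ∗ μ) (x / b) := by
  rw [jointTail_map_mul_right, upperTail, Measure.conv,
    map_measureReal_apply measurable_add measurableSet_Ioi]
  refine measureReal_mono fun p ⟨_, hp₂, hpx⟩ ↦ (div_lt_iff₀ hb).2 ?_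
  have hp₂_pos : 0 < p.2 := pos_of_mul_pos_left (hK.trans_lt hp₂) hc
  nlinarith

lemma jointTail_map_mul_right_le_jointTail_add [IsProbabilityMeasure μ] (hc : 0 ≤ c)
    (hcb : c ≤ b) (hcB : c ≤ B) (hM : 0 < M) (hb : 0 < b) (hB : 0 < B) (hK : M * B ≤ K)
    (hx : 2 * M ≤ x / b) :
    jointTail (μ.map (· * b)) (μ.map (· * c)) K x ≤
      jointTail μ μ M (x / b) +
        (Ioi (K / M)).indicator (fun _ ↦ upperTail μ (x / (2 * B))) b := by
  have hsub : {p : ℝ × ℝ | K < p.1 * b ∧ K < p.2 * c ∧ x < p.1 * b + p.2 * c} ⊆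
      {p | M < p.1 ∧ M < p.2 ∧ x / b < p.1 + p.2} ∪
        {p | K / M < b ∧ x / (2 * B) < p.2} := by
    intro p ⟨hp₁, hp₂, hpx⟩
    have hMB : 0 < M * B := mul_pos hM hB
    have hp₂_pos : 0 < p.2 := pos_of_mul_pos_left (hMB.trans (hK.trans_lt hp₂)) hc
    rw [le_div_iff₀ hb] at hx
    -- If `p.1 ≤ M`, then `p.1 * b` is at most `x / 2`, so `p.2 * c` exceeds `x / 2`.
    rcases lt_or_ge M p.1 with hMp | hMp
    · refine .inl ⟨hMp, ?_, (div_lt_iff₀ hb).2 ?_⟩ <;> nlinarith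
    · refine .inr ⟨(div_lt_iff₀ hM).2 ?_, (div_lt_iff₀ (by positivity)).2 ?_⟩ <;> nlinarith
  rw [jointTail_map_mul_right]
  refine (measureReal_mono hsub).trans ((measureReal_union_le _ _).trans
    (add_le_add_right (le_of_eq ?_) _))
  by_cases hKb : K / M < b
  · have hset : {p : ℝ × ℝ | K / M < b ∧ x / (2 * B) < p.2} = univ ×ˢ Ioi (x / (2 * B)) := by
      ext p; simp [hKb]
    rw [hset, measureReal_prod_prod, probReal_univ, one_mul, indicator_of_mem (mem_Ioi.2 hKb),
      upperTail]
  · simp [hKb]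

lemma jointTail_map_mul_right_le [IsProbabilityMeasure μ] (hc : 0 ≤ c) (hcb : c ≤ b)
    (hM : 0 < M) (hB : 0 < B) (hK : M * B ≤ K) (hMU : 2 * M ≤ U) (hC : 0 ≤ C)
    (hη : 0 ≤ η) (hconv : ∀ u ≥ U, upperTail (μ ∗ μ) u ≤ C * upperTail μ u)
    (hjump : ∀ u ≥ U, jointTail μ μ M u ≤ η * upperTail μ u) :
    jointTail (μ.map (· * b)) (μ.map (· * c)) K x ≤
      upperTail (μ.map (· * b)) x * ((Ioi B).indicator (fun _ ↦ C) c + η) +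
        ((Ioi (K / M)).indicator (fun _ ↦ upperTail μ (x / (2 * B))) b +
          (Ioi (x / U)).indicator 1 b) := by
  have hK₀ : 0 < K := (mul_pos hM hB).trans_le hK
  have hU : 0 < U := by linarith
  have hcoeff : 0 ≤ (Ioi B).indicator (fun _ ↦ C) c := indicator_nonneg (fun _ _ ↦ hC) c
  have hmain := mul_nonneg (upperTail_nonneg (μ.map (· * b)) x) (add_nonneg hcoeff hη)
  have hcross : 0 ≤ (Ioi (K / M)).indicator (fun _ ↦ upperTail μ (x / (2 * B))) b :=
    indicator_nonneg (fun _ _ ↦ upperTail_nonneg ..) b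
  have hlarge : 0 ≤ (Ioi (x / U)).indicator (1 : ℝ → ℝ) b :=
    indicator_nonneg (fun _ _ ↦ zero_le_one) b
  rcases (hc.trans hcb).eq_or_lt with rfl | hb
  · have hzero : jointTail (μ.map (· * 0)) (μ.map (· * c)) K x = 0 := by
      rw [jointTail_map_mul_right]
      simp [hK₀.not_gt]
    linarith
  rcases lt_or_ge (x / U) b with hbU | hbU
  · rw [indicator_of_mem (mem_Ioi.2 hbU), Pi.one_apply]
    have hone : jointTail (μ.map (· * b)) (μ.map (· * c)) K x ≤ 1 := by
      rw [jointTail_map_mul_right]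
      exact measureReal_le_one
    linarith
  have hUb : U ≤ x / b := (le_div_comm₀ hU hb).2 hbU
  have hη' := mul_nonneg hη (upperTail_nonneg μ (x / b))
  rw [upperTail_map_mul_right hb] at hmain ⊢
  rcases le_or_gt c B with hcB | hcB
  · rw [indicator_of_notMem (notMem_Ioi.2 hcB)]
    linarith [hjump _ hUb,
      jointTail_map_mul_right_le_jointTail_add (μ := μ) hc hcb hcB hM hb hB hK (hMU.trans hUb)]
  · rw [indicator_of_mem (mem_Ioi.2 hcB)]
    linarith [hconv _ hUb,
      jointTail_map_mul_right_le_upperTail_conv (μ := μ) (x := x) hc hcb hb hK₀.le]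

lemma jointTail_mconv_self_le [IsProbabilityMeasure μ] [IsProbabilityMeasure ν]
    (hν : ∀ᵐ y ∂ν, 0 ≤ y) (hM : 0 < M) (hB : 0 < B) (hK : M * B ≤ K)
    (hMU : 2 * M ≤ U) (hC : 0 ≤ C) (hη : 0 ≤ η)
    (hconv : ∀ u ≥ U, upperTail (μ ∗ μ) u ≤ C * upperTail μ u)
    (hjump : ∀ u ≥ U, jointTail μ μ M u ≤ η * upperTail μ u) :
    jointTail (μ ∗ₘ ν) (μ ∗ₘ ν) K x ≤
      2 * (upperTail (μ ∗ₘ ν) x * (C * upperTail ν B + η) +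
        (upperTail μ (x / (2 * B)) * upperTail ν (K / M) + upperTail ν (x / U))) := by
  set coeff : ℝ → ℝ := fun c ↦ (Ioi B).indicator (fun _ ↦ C) c + η
  set cross := (Ioi (K / M)).indicator fun _ ↦ upperTail μ (x / (2 * B))
  set large : ℝ → ℝ := (Ioi (x / U)).indicator 1
  have hint_tail := integrable_upperTail_map_mul_right μ ν x
  have hint_ind : Integrable ((Ioi B).indicator fun _ ↦ C) ν :=
    (integrable_const _).indicator measurableSet_Ioi
  have hint_coeff : Integrable coeff ν := hint_ind.add (integrable_const η)
  have hint_cross : Integrable cross ν := (integrable_const _).indicator measurableSet_Ioi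
  have hint_large : Integrable large ν := (integrable_const _).indicator measurableSet_Ioi
  have hint_fst : Integrable (fun b ↦ cross b + large b) ν := hint_cross.add hint_large
  have hbound : ∀ q : ℝ × ℝ, 0 ≤ upperTail (μ.map (· * q.1)) x * coeff q.2 +
      (cross q.1 + large q.1) := fun q ↦ add_nonneg
    (mul_nonneg (upperTail_nonneg ..) (add_nonneg (indicator_nonneg (fun _ _ ↦ hC) _) hη))
    (add_nonneg (indicator_nonneg (fun _ _ ↦ upperTail_nonneg ..) _)
      (indicator_nonneg (fun _ _ ↦ zero_le_one) _))
  rw [jointTail_mconv_self]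
  refine (integral_prod_self_le_two_mul (integrable_jointTail_map_mul_right μ ν K x)
    ((hint_tail.mul_prod hint_coeff).add (hint_fst.comp_fst ν)) (fun q ↦ jointTail_comm ..)
    (.of_forall hbound) ?_).trans_eq ?_
  · filter_upwards [Measure.quasiMeasurePreserving_snd.ae hν] with q hq hqq
    exact jointTail_map_mul_right_le hq hqq hM hB hK hMU hC hη hconv hjump
  · simp only [Pi.add_apply]
    rw [integral_prod_mul_add_fst hint_tail hint_coeff hint_fst, ← upperTail_mconv,
      integral_add hint_ind (integrable_const η), integral_add hint_cross hint_large,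
      integral_indicator_const _ measurableSet_Ioi, integral_indicator_const _ measurableSet_Ioi,
      integral_indicator_one measurableSet_Ioi, integral_const, probReal_univ, one_smul,
      smul_eq_mul, smul_eq_mul, mul_comm _ C, mul_comm _ (upperTail μ _)]
    rfl

lemma SingleBigJump.mconv [IsProbabilityMeasure μ] [IsProbabilityMeasure ν] (hμ : SingleBigJump μ)
    (hconv : upperTail (μ ∗ μ) =O[atTop] upperTail μ) (hν : ∀ᵐ y ∂ν, 0 ≤ y)
    (hA : ∀ b > 0, (fun x ↦ upperTail ν (b * x)) =o[atTop] upperTail (μ ∗ₘ ν)) :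
    SingleBigJump (μ ∗ₘ ν) := by
  intro ε hε
  obtain ⟨C, hC, hconv⟩ := hconv.exists_pos
  have hconv' : ∀ᶠ u in atTop, upperTail (μ ∗ μ) u ≤ C * upperTail μ u := by
    filter_upwards [hconv.bound] with u hu
    rwa [Real.norm_of_nonneg (upperTail_nonneg ..), Real.norm_of_nonneg (upperTail_nonneg ..)] at hu
  obtain ⟨η, hη, hηε⟩ : ∃ η > 0, 2 * (C + 3) * η = ε :=
    ⟨ε / (2 * (C + 3)), by positivity, mul_div_cancel₀ _ (by positivity)⟩
  obtain ⟨B, hνB, hB⟩ := ((eventually_upperTail_le ν hη).and (eventually_gt_atTop 0)).exists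
  obtain ⟨M, hjump, hM⟩ := ((hμ η hη).and (eventually_gt_atTop 0)).exists
  obtain ⟨U, hU, hMU⟩ := ((eventually_forall_ge_atTop.2 (hconv'.and hjump)).and
    (eventually_ge_atTop (2 * M))).exists
  have hU₀ : 0 < U := by linarith
  filter_upwards [eventually_ge_atTop (M * B), (tendsto_id.atTop_div_const hM).eventually
    (eventually_upperTail_le_mul ν (2 * B) hη)] with K hK hνK
  filter_upwards [eventually_ge_atTop 0, eventually_le_mul_of_isLittleO (hA U⁻¹ (inv_pos.2 hU₀))
    (upperTail_nonneg _) hη] with x hx hνx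
  rw [← div_eq_inv_mul] at hνx
  set T := upperTail (μ ∗ₘ ν) x
  have hT : 0 ≤ T := upperTail_nonneg ..
  have hcross : upperTail μ (x / (2 * B)) * upperTail ν (K / M) ≤ η * T :=
    calc upperTail μ (x / (2 * B)) * upperTail ν (K / M)
        ≤ upperTail μ (x / (2 * B)) * (η * upperTail ν (2 * B)) :=
          mul_le_mul_of_nonneg_left hνK (upperTail_nonneg ..)
      _ = η * (upperTail μ (x / (2 * B)) * upperTail ν (2 * B)) := mul_left_comm ..
      _ ≤ η * T := mul_le_mul_of_nonneg_left
          (upperTail_mul_upperTail_le_mconv μ ν (by positivity) hx) hη.le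
  calc jointTail (μ ∗ₘ ν) (μ ∗ₘ ν) K x
      ≤ 2 * (T * (C * upperTail ν B + η) +
          (upperTail μ (x / (2 * B)) * upperTail ν (K / M) + upperTail ν (x / U))) :=
        jointTail_mconv_self_le hν hM hB hK hMU hC.le hη.le (fun u hu ↦ (hU u hu).1)
          fun u hu ↦ (hU u hu).2
    _ ≤ 2 * (T * (C * η + η) + (η * T + η * T)) := by gcongr
    _ = ε * T := by rw [← hηε]; ring

end ProductSingleBigJump

lemma integrable_exp_mconv {μ ν : Measure ℝ} [IsFiniteMeasure μ] [IsFiniteMeasure ν] {γ α : ℝ}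
    (hi : Integrable (fun y ↦ Real.exp (γ * y)) μ) (hν : ∀ᵐ y ∂ν, 0 ≤ y) (hα₀ : 0 ≤ α)
    (hα : ∀ᵐ y ∂ν, α * y ≤ γ) : Integrable (fun y ↦ Real.exp (α * y)) (μ ∗ₘ ν) := by
  rw [Measure.mconv, integrable_map_measure (by fun_prop) measurable_mul.aemeasurable]
  refine ((integrable_const 1).add (hi.comp_fst ν)).mono' (by fun_prop) ?_
  filter_upwards [Measure.quasiMeasurePreserving_snd.ae hν,
    Measure.quasiMeasurePreserving_snd.ae hα] with p hp hαp
  rw [Function.comp_apply, Real.norm_of_nonneg (Real.exp_pos _).le]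
  change Real.exp (α * (p.1 * p.2)) ≤ 1 + Real.exp (γ * p.1)
  have hαp₀ : 0 ≤ α * p.2 := mul_nonneg hα₀ hp
  rcases le_total p.1 0 with hp₁ | hp₁
  · refine (Real.exp_le_one_iff.2 ?_).trans (le_add_of_nonneg_right (Real.exp_pos _).le)
    nlinarith
  · refine (Real.exp_le_exp.2 ?_).trans (le_add_of_nonneg_left zero_le_one)
    nlinarith

lemma MemClassS.isBigO_upperTail_conv {m : Measure ℝ} {γ : ℝ} (h : MemClassS m γ) :
    upperTail (m ∗ m) =O[atTop] upperTail m :=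
  isBigO_of_div_tendsto_nhds (.of_forall fun x hx ↦ absurd hx (h.memClassL.tail_pos x).ne') _
    h.tendsto_conv_div

theorem MemClassS.mconv {μ ν : Measure ℝ} [IsProbabilityMeasure μ] [IsProbabilityMeasure ν]
    {γ α : ℝ} (hμ : MemClassS μ γ) (hγ : 0 ≤ γ) (hν : ∀ᵐ y ∂ν, 0 ≤ y)
    (hA : ∀ b > 0, (fun x ↦ upperTail ν (b * x)) =o[atTop] upperTail (μ ∗ₘ ν))
    (hα : IsGreatest {a | ∀ᵐ y ∂ν, a * y ≤ γ} α) : MemClassS (μ ∗ₘ ν) α :=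
  .of_singleBigJump (hμ.memClassL.mconv hγ hν hA hα)
    (integrable_exp_mconv hμ.integrable_exp hν (nonneg_of_mem_upperBounds_slopes hγ hα.2) hα.1)
    (hμ.singleBigJump.mconv hμ.isBigO_upperTail_conv hν hA)

section RightEndpoint

variable {ν : Measure ℝ} {γ : ℝ}

lemma div_mem_upperBounds_upperTail_pos [IsFiniteMeasure ν] {a : ℝ} (ha : 0 < a)
    (h : ∀ᵐ y ∂ν, a * y ≤ γ) : γ / a ∈ upperBounds {y | 0 < upperTail ν y} := by
  rintro y (hy : 0 < upperTail ν y)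
  by_contra! hay
  have hzero : upperTail ν (γ / a) = 0 :=
    upperTail_eq_zero_iff.2 (h.mono fun z hz ↦ (le_div_iff₀' ha).2 hz)
  exact hy.not_ge ((antitone_upperTail ν hay.le).trans_eq hzero)

lemma isGreatest_div_sSup_upperTail_pos [IsFiniteMeasure ν] (hν₀ : 0 < upperTail ν 0)
    (hbdd : BddAbove {y | 0 < upperTail ν y}) (hγ : 0 ≤ γ) :
    IsGreatest {a | ∀ᵐ y ∂ν, a * y ≤ γ} (γ / sSup {y | 0 < upperTail ν y}) := by
  set β := sSup {y | 0 < upperTail ν y}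
  obtain ⟨b, hb, hνb⟩ := exists_gt_upperTail_pos hν₀
  have hβ : 0 < β := hb.trans_le (le_csSup hbdd hνb)
  have hνβ : upperTail ν β = 0 := by
    refine ((upperTail_nonneg ν β).eq_or_lt.resolve_right fun h ↦ ?_).symm
    obtain ⟨c, hβc, hc⟩ := exists_gt_upperTail_pos h
    exact hβc.not_ge (le_csSup hbdd hc)
  refine ⟨(upperTail_eq_zero_iff.1 hνβ).mono fun y hy ↦ ?_, fun a ha ↦ ?_⟩
  · calc γ / β * y ≤ γ / β * β := by gcongr
      _ = γ := div_mul_cancel₀ γ hβ.ne'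
  · rcases le_or_gt a 0 with ha₀ | ha₀
    · exact ha₀.trans (by positivity)
    · exact (le_div_comm₀ hβ ha₀).1
        (csSup_le ⟨b, hνb⟩ (div_mem_upperBounds_upperTail_pos ha₀ ha))

lemma isGreatest_zero_of_not_bddAbove [IsFiniteMeasure ν]
    (hν : ¬BddAbove {y | 0 < upperTail ν y}) (hγ : 0 ≤ γ) :
    IsGreatest {a | ∀ᵐ y ∂ν, a * y ≤ γ} 0 := by
  refine ⟨by simp [hγ], fun a ha ↦ ?_⟩
  by_contra! ha₀
  exact hν ⟨_, div_mem_upperBounds_upperTail_pos ha₀ ha⟩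

end RightEndpoint

section RandomVariable

variable {Ω : Type*} [MeasureSpace Ω] {Y Z : Ω → ℝ} {γ : ℝ}

lemma rvTail_eq_upperTail (hZ : AEMeasurable Z ℙ) : rvTail Z = upperTail (Measure.map Z ℙ) := by
  ext x
  rw [upperTail, Measure.real, Measure.map_apply_of_aemeasurable hZ measurableSet_Ioi]
  rfl

lemma unboundedDist_iff [IsFiniteMeasure (ℙ : Measure Ω)] (hZ : AEMeasurable Z ℙ) :
    UnboundedDist Z ↔ ∀ x, 0 < upperTail (Measure.map Z ℙ) x := by
  rw [UnboundedDist, rvTail_eq_upperTail hZ]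
  exact ⟨fun h x ↦ (h (max x 1) (by positivity)).trans_le
    (antitone_upperTail _ (le_max_left x 1)), fun h x _ ↦ h x⟩

lemma memLGamma_iff [IsFiniteMeasure (ℙ : Measure Ω)] (hZ : AEMeasurable Z ℙ) :
    MemLGamma Z γ ↔ MemClassL (Measure.map Z ℙ) γ := by
  rw [MemLGamma, unboundedDist_iff hZ, rvTail_eq_upperTail hZ]
  refine ⟨fun ⟨hpos, h⟩ ↦ .of_pos hpos fun t ht ↦ ?_, fun h ↦ ⟨h.tail_pos, fun t _ ↦ ?_⟩⟩
  · exact (isEquivalent_const_mul_iff_tendsto_div (Real.exp_ne_zero _)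
      fun x ↦ (hpos x).ne').1 (h t ht)
  · exact (isEquivalent_const_mul_iff_tendsto_div (Real.exp_ne_zero _)
      fun x ↦ (h.tail_pos x).ne').2 (h.tendsto_div t)

lemma memSGamma_iff [IsProbabilityMeasure (ℙ : Measure Ω)] (hZ : AEMeasurable Z ℙ) :
    MemSGamma Z γ ↔ MemClassS (Measure.map Z ℙ) γ := by
  have := Measure.isProbabilityMeasure_map hZ
  have hconv (hL : MemClassL (Measure.map Z ℙ) γ)
      (hi : Integrable (fun y ↦ Real.exp (γ * y)) (Measure.map Z ℙ)) :=
    isEquivalent_const_mul_iff_tendsto_div (l := atTop) (u := fun x ↦ convSqTail Z x)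
      (mul_ne_zero two_ne_zero (integral_exp_pos hi).ne') fun x ↦ (hL.tail_pos x).ne'
  rw [MemSGamma, memLGamma_iff hZ, rvTail_eq_upperTail hZ]
  exact ⟨fun ⟨hL, hi, h⟩ ↦ ⟨hL, hi, (hconv hL hi).1 h⟩,
    fun ⟨hL, hi, h⟩ ↦ ⟨hL, hi, (hconv hL hi).2 h⟩⟩

lemma isGreatest_gammaOverBeta [IsFiniteMeasure (ℙ : Measure Ω)] (hY : AEMeasurable Y ℙ)
    (hY₀ : 0 < upperTail (Measure.map Y ℙ) 0) (hγ : 0 ≤ γ) :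
    IsGreatest {a | ∀ᵐ y ∂Measure.map Y ℙ, a * y ≤ γ} (gammaOverBeta Y γ) := by
  rw [gammaOverBeta, rvTail_eq_upperTail hY]
  split_ifs with hbdd
  · exact isGreatest_div_sSup_upperTail_pos hY₀ hbdd hγ
  · exact isGreatest_zero_of_not_bddAbove hbdd hγ

lemma upperTail_map_pos_of_measure_eq_zero_ne_one [IsProbabilityMeasure (ℙ : Measure Ω)]
    (hY : AEMeasurable Y ℙ) (hY_nonneg : ∀ ω, 0 ≤ Y ω) (hY_ne : ℙ {ω | Y ω = 0} ≠ 1) :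
    0 < upperTail (Measure.map Y ℙ) 0 := by
  refine (upperTail_nonneg ..).lt_of_ne' fun h ↦ hY_ne ((mem_ae_iff_prob_eq_one₀
    (nullMeasurableSet_eq_fun hY aemeasurable_const)).1 ?_)
  filter_upwards [ae_of_ae_map hY (upperTail_eq_zero_iff.1 h)] with ω hω
  exact hω.antisymm (hY_nonneg ω)

end RandomVariable

theorem product_memS_of_indep {Ω : Type*} [MeasureSpace Ω] [IsProbabilityMeasure (ℙ : Measure Ω)]
    (X Y : Ω → ℝ) (hXm : Measurable X) (hYm : Measurable Y)
    (hYnonneg : ∀ ω, 0 ≤ Y ω)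
    (hFunb : UnboundedDist X)
    (hXnd : ℙ {ω | X ω = 0} ≠ 1) (hYnd : ℙ {ω | Y ω = 0} ≠ 1)
    (hInd : IndepFun X Y ℙ) (hA2 : Assumption2 X Y)
    (γ : ℝ) (hγ : 0 ≤ γ) (hFS : MemSGamma X γ) :
    MemSGamma (fun ω => X ω * Y ω) (gammaOverBeta Y γ) := by
  have hX := hXm.aemeasurable (μ := ℙ)
  have hY := hYm.aemeasurable (μ := ℙ)
  have hXY : AEMeasurable (fun ω ↦ X ω * Y ω) ℙ := hX.mul hY
  have hlawX := Measure.isProbabilityMeasure_map hX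
  have hlawY := Measure.isProbabilityMeasure_map hY
  have hlaw : Measure.map (fun ω ↦ X ω * Y ω) ℙ = Measure.map X ℙ ∗ₘ Measure.map Y ℙ :=
    hInd.map_mul_eq_map_mconv_map hXm hYm
  have hY_nonneg : ∀ᵐ y ∂Measure.map Y ℙ, 0 ≤ y :=
    (ae_map_iff hY measurableSet_Ici).2 (.of_forall hYnonneg)
  have hY_pos := upperTail_map_pos_of_measure_eq_zero_ne_one hY hYnonneg hYnd
  simp only [Assumption2, rvTail_eq_upperTail hY, rvTail_eq_upperTail hXY, hlaw] at hA2
  rw [memSGamma_iff hXY, hlaw]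
  exact ((memSGamma_iff hX).1 hFS).mconv hγ hY_nonneg hA2 (isGreatest_gammaOverBeta hY hY_pos hγ)
end
end

section
/- Let X be a real-valued random variable with unbounded distribution F and Y a nonnegative random variable with distribution G, neither degenerate at zero, and suppose (X,Y) follows an FGM distribution with parameter θ=1. Let α_G=inf{y: G(y)>0} denote the left endpoint of G and suppose P(Y=α_G)>0, and that Assumption 2 holds (Ḡ(bx)=o(H̄(x)) as x→∞ for every b>0, where H is the distribution of XY). Then P(XY>x) ~ ∫_0^∞ (1+(G(y)+G(y−)−1)) F̄(x/y) G(dy) as x→∞, where G(y−)=lim_{δ→0+} G(y−δ). -/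
open MeasureTheory ProbabilityTheory Filter Set Asymptotics

noncomputable section

/-!
With `k(y) = 1 - V(y) - V(y-)` for a distribution function `V`, an FGM law has density
`1 + θ k_F(x) k_G(y)` with respect to the product of its marginals. Integrating out `X` gives, for
`x ≥ 0`, `P(XY > x) = ∫_{y > 0} F̄(x/y) (1 - θ F(x/y) k_G(y)) G(dy)`, and the claim is that the
factor `F(x/y)` may be replaced by `1`. The error is at most
`∫ F̄(x/y)² G(dy) ≤ F̄(M) ∫ F̄(x/y) G(dy) + Ḡ(x/M)` for every `M > 0`. Its second term is
`o(P(XY > x))` by Assumption 2. The first is a small multiple of the limit integral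
`∫ F̄(x/y) (1 - θ k_G(y)) G(dy)`, because this dominates `(1 + min θ 0) ∫ F̄(x/y) G(dy)`:
for `θ ≥ 0` by Chebyshev's association inequality, since `k_G` is decreasing with mean zero and
`y ↦ F̄(x/y)` is increasing, and for `θ ≤ 0` pointwise.
-/

section Antivary

variable {α : Type*} [MeasurableSpace α] {ν : Measure α} [IsProbabilityMeasure ν] {f g : α → ℝ}

lemma integral_mul_le_integral_mul_integral_of_antivary (h : Antivary f g) (hf : Integrable f ν)
    (hg : Integrable g ν) (hfg : Integrable (fun a => f a * g a) ν) :
    ∫ a, f a * g a ∂ν ≤ (∫ a, f a ∂ν) * ∫ a, g a ∂ν := by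
  have hnonpos : ∫ p, (f p.2 - f p.1) * (g p.2 - g p.1) ∂ν.prod ν ≤ 0 :=
    integral_nonpos fun p => antivary_iff_forall_mul_nonpos.1 h p.1 p.2
  have hexpand : ∫ p, (f p.2 - f p.1) * (g p.2 - g p.1) ∂ν.prod ν =
      2 * (∫ a, f a * g a ∂ν - (∫ a, f a ∂ν) * ∫ a, g a ∂ν) := calc
    _ = ∫ p, ((f p.1 * g p.1 + f p.2 * g p.2) - (f p.1 * g p.2 + g p.1 * f p.2)) ∂ν.prod ν := by
      congr with p; ring
    _ = _ := by
      rw [integral_sub (by exact (hfg.comp_fst ν).add (hfg.comp_snd ν))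
          (by exact (hf.mul_prod hg).add (hg.mul_prod hf)),
        integral_add (hfg.comp_fst ν) (hfg.comp_snd ν),
        integral_add (hf.mul_prod hg) (hg.mul_prod hf), integral_prod_mul, integral_prod_mul,
        integral_fun_fst (fun a => f a * g a), integral_fun_snd (fun a => f a * g a)]
      simp only [probReal_univ, one_smul]
      ring
  linarith

end Antivary

lemma isEquivalent_of_sub_isLittleO_norm_add_norm {α E : Type*} [SeminormedAddCommGroup E]
    {l : Filter α} {u v : α → E}
    (h : (fun x => u x - v x) =o[l] fun x => ‖u x‖ + ‖v x‖) : u ~[l] v := by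
  refine isLittleO_iff.2 fun c hc => ?_
  filter_upwards [isLittleO_iff.1 h (show 0 < c / (2 + c) by positivity)] with x hx
  rw [Real.norm_of_nonneg (by positivity), div_mul_eq_mul_div, le_div_iff₀ (by positivity)] at hx
  have htri : ‖u x‖ ≤ ‖u x - v x‖ + ‖v x‖ := by simpa using norm_add_le (u x - v x) (v x)
  have := mul_le_mul_of_nonneg_left htri hc.le
  simp only [Pi.sub_apply]
  linarith

lemma exists_mem_support_le_measure_Ioc_eq_zero {α : Type*} [ConditionallyCompleteLinearOrder α]
    [TopologicalSpace α] [OrderTopology α] [HereditarilyLindelofSpace α] [MeasurableSpace α]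
    {ν : Measure α} {x : α} (hx : ν (Iic x) ≠ 0) :
    ∃ a ∈ ν.support, a ≤ x ∧ ν (Ioc a x) = 0 := by
  set S := Iic x ∩ ν.support
  have hne : S.Nonempty := Measure.nonempty_inter_support_of_pos (pos_iff_ne_zero.2 hx)
  have hbdd : BddAbove S := ⟨x, fun _ h => h.1⟩
  have hmem : sSup S ∈ S := (isClosed_Iic.inter Measure.isClosed_support).csSup_mem hne hbdd
  have hgap : Ioc (sSup S) x ⊆ ν.supportᶜ := fun b hb hbν =>
    (le_csSup hbdd ⟨hb.2, hbν⟩).not_gt hb.1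
  exact ⟨sSup S, hmem.2, hmem.1, measure_mono_null hgap Measure.measure_compl_support⟩

section Quadrant

variable {α β : Type*}
  [LinearOrder α] [TopologicalSpace α] [OrderTopology α] [SecondCountableTopology α]
  [LinearOrder β] [TopologicalSpace β] [OrderTopology β] [SecondCountableTopology β]

lemma isCountablySpanning_range_Ioi [Nonempty α] [NoMinOrder α] :
    IsCountablySpanning (range (Ioi : α → Set α)) := by
  obtain ⟨u, -, hu⟩ := exists_seq_antitone_tendsto_atTop_atBot α
  refine ⟨fun n => Ioi (u n), fun n => mem_range_self _, eq_univ_of_forall fun a => ?_⟩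
  exact mem_iUnion.2 (hu.eventually_lt_atBot a).exists

lemma measure_ext_of_Ioi_prod_Ioi [Nonempty α] [NoMinOrder α] [Nonempty β] [NoMinOrder β]
    [MeasurableSpace α] [BorelSpace α] [MeasurableSpace β] [BorelSpace β]
    {ρ σ : Measure (α × β)} [IsFiniteMeasure ρ]
    (h : ∀ x y, ρ (Ioi x ×ˢ Ioi y) = σ (Ioi x ×ˢ Ioi y)) : ρ = σ := by
  have hα : MeasurableSpace.generateFrom (range (Ioi : α → Set α)) = ‹MeasurableSpace α› :=
    (borel_eq_generateFrom_Ioi α).symm.trans BorelSpace.measurable_eq.symm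
  have hβ : MeasurableSpace.generateFrom (range (Ioi : β → Set β)) = ‹MeasurableSpace β› :=
    (borel_eq_generateFrom_Ioi β).symm.trans BorelSpace.measurable_eq.symm
  obtain ⟨B, hB, hBuniv⟩ := (isCountablySpanning_range_Ioi (α := α)).prod
    (isCountablySpanning_range_Ioi (α := β))
  refine Measure.ext_of_generateFrom_of_iUnion _ B
    (generateFrom_eq_prod hα hβ isCountablySpanning_range_Ioi isCountablySpanning_range_Ioi).symm
    (isPiSystem_Ioi.prod isPiSystem_Ioi) hBuniv hB (fun _ => measure_ne_top _ _) ?_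
  rintro _ ⟨_, ⟨x, rfl⟩, _, ⟨y, rfl⟩, rfl⟩
  exact h x y

end Quadrant

section Kernel

/-- The kernel `1 - V(y) - V(y-)` of an FGM law in a coordinate with distribution function `V`,
written as the difference of the two strict tails of `V` so that it makes sense for any finite
measure. -/
def fgmKernel {α : Type*} [Preorder α] [MeasurableSpace α] (ν : Measure α) (y : α) : ℝ :=
  ν.real (Ioi y) - ν.real (Iio y)

/-- The density, with respect to the product of the marginals, of the FGM law with parameter `θ`
and marginals `μ` and `ν`. -/
def fgmDensity {α β : Type*} [Preorder α] [MeasurableSpace α] [Preorder β] [MeasurableSpace β]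
    (θ : ℝ) (μ : Measure α) (ν : Measure β) (p : α × β) : ℝ :=
  1 + θ * (fgmKernel μ p.1 * fgmKernel ν p.2)

section Preorder

variable {α β : Type*} [Preorder α] [MeasurableSpace α] [Preorder β] [MeasurableSpace β]

lemma antitone_measureReal_Ioi (ν : Measure α) [IsFiniteMeasure ν] :
    Antitone fun y => ν.real (Ioi y) :=
  fun _ _ h => measureReal_mono (Ioi_subset_Ioi h)

lemma monotone_measureReal_Iio (ν : Measure α) [IsFiniteMeasure ν] :
    Monotone fun y => ν.real (Iio y) :=
  fun _ _ h => measureReal_mono (Iio_subset_Iio h)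

lemma antitone_fgmKernel (ν : Measure α) [IsFiniteMeasure ν] : Antitone (fgmKernel ν) :=
  fun _ _ h => sub_le_sub (antitone_measureReal_Ioi ν h) (monotone_measureReal_Iio ν h)

lemma abs_fgmKernel_le_one (ν : Measure α) [IsProbabilityMeasure ν] (y : α) :
    |fgmKernel ν y| ≤ 1 :=
  abs_sub_le_of_nonneg_of_le measureReal_nonneg measureReal_le_one measureReal_nonneg
    measureReal_le_one

lemma fgmDensity_nonneg {θ : ℝ} (hθ : |θ| ≤ 1) (μ : Measure α) (ν : Measure β)
    [IsProbabilityMeasure μ] [IsProbabilityMeasure ν] (p : α × β) : 0 ≤ fgmDensity θ μ ν p := by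
  have h : |θ * (fgmKernel μ p.1 * fgmKernel ν p.2)| ≤ 1 := by
    rw [abs_mul, abs_mul]
    exact mul_le_one₀ hθ (by positivity) (mul_le_one₀ (abs_fgmKernel_le_one μ _) (abs_nonneg _)
      (abs_fgmKernel_le_one ν _))
  unfold fgmDensity
  linarith [neg_le_of_abs_le h]

end Preorder

variable {α β : Type*}
  [LinearOrder α] [TopologicalSpace α] [OrderTopology α] [MeasurableSpace α] [BorelSpace α]
  [LinearOrder β] [TopologicalSpace β] [OrderTopology β] [MeasurableSpace β] [BorelSpace β]

section Integrable

variable (ν ρ : Measure α) [IsFiniteMeasure ν] [IsFiniteMeasure ρ]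

lemma integrable_measureReal_Ioi : Integrable (fun y => ν.real (Ioi y)) ρ :=
  .of_bound (antitone_measureReal_Ioi ν).measurable.aestronglyMeasurable (ν.real univ)
    (ae_of_all _ fun y => by
      rw [Real.norm_of_nonneg measureReal_nonneg]
      exact measureReal_mono (subset_univ _))

lemma integrable_measureReal_Iio : Integrable (fun y => ν.real (Iio y)) ρ :=
  .of_bound (monotone_measureReal_Iio ν).measurable.aestronglyMeasurable (ν.real univ)
    (ae_of_all _ fun y => by
      rw [Real.norm_of_nonneg measureReal_nonneg]
      exact measureReal_mono (subset_univ _))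

lemma integrable_fgmKernel : Integrable (fgmKernel ν) ρ :=
  (integrable_measureReal_Ioi ν ρ).sub (integrable_measureReal_Iio ν ρ)

lemma fgmKernel_restrict_Ioi {x y : α} (hxy : x < y) :
    fgmKernel (ν.restrict (Ioi x)) y = fgmKernel ν y + ν.real (Iic x) := by
  have hIio : ν.real (Iio y ∩ Ioi x) + ν.real (Iic x) = ν.real (Iio y) := by
    rw [← measureReal_inter_add_sdiff (s := Iio y) (measurableSet_Ioi (a := x))]
    congr 2
    ext z
    simpa using fun hz => hz.trans_lt hxy
  rw [fgmKernel, fgmKernel, measureReal_restrict_apply measurableSet_Ioi,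
    measureReal_restrict_apply measurableSet_Iio, inter_eq_left.2 (Ioi_subset_Ioi hxy.le)]
  linarith

end Integrable

lemma integrable_fgmDensity (θ : ℝ) (μ : Measure α) [IsFiniteMeasure μ] (ν : Measure β)
    [IsFiniteMeasure ν] : Integrable (fgmDensity θ μ ν) (μ.prod ν) :=
  (integrable_const 1).add
    (((integrable_fgmKernel μ μ).mul_prod (integrable_fgmKernel ν ν)).const_mul θ)

lemma withDensity_fgmDensity_apply {θ : ℝ} (hθ : |θ| ≤ 1) (μ : Measure α) [IsProbabilityMeasure μ]
    (ν : Measure β) [IsProbabilityMeasure ν] {s : Set (α × β)} (hs : MeasurableSet s) :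
    (μ.prod ν).withDensity (fun p => ENNReal.ofReal (fgmDensity θ μ ν p)) s =
      ENNReal.ofReal (∫ p in s, fgmDensity θ μ ν p ∂μ.prod ν) := by
  rw [withDensity_apply _ hs, ofReal_integral_eq_lintegral_ofReal
    (integrable_fgmDensity θ μ ν).restrict (ae_of_all _ (fgmDensity_nonneg hθ μ ν))]

variable [SecondCountableTopology α] [SecondCountableTopology β]

lemma lintegral_measure_Ioi_eq_lintegral_measure_Iio (ν : Measure α) [SFinite ν] :
    ∫⁻ y, ν (Ioi y) ∂ν = ∫⁻ y, ν (Iio y) ∂ν := by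
  have hs : MeasurableSet {p : α × α | p.1 < p.2} := measurableSet_lt measurable_fst measurable_snd
  exact (Measure.prod_apply hs).symm.trans (Measure.prod_apply_symm hs)

lemma integral_fgmKernel_self (ν : Measure α) [IsFiniteMeasure ν] :
    ∫ y, fgmKernel ν y ∂ν = 0 := by
  have hIoi := integrable_measureReal_Ioi ν ν
  have hIio := integrable_measureReal_Iio ν ν
  unfold fgmKernel
  rw [integral_sub hIoi hIio, sub_eq_zero,
    integral_eq_lintegral_of_nonneg_ae (ae_of_all _ fun _ => measureReal_nonneg) hIoi.1,
    integral_eq_lintegral_of_nonneg_ae (ae_of_all _ fun _ => measureReal_nonneg) hIio.1]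
  simp_rw [ofReal_measureReal (measure_ne_top ν _)]
  rw [lintegral_measure_Ioi_eq_lintegral_measure_Iio]

lemma le_integral_one_sub_mul_fgmKernel (θ : ℝ) (ν : Measure α) [IsProbabilityMeasure ν]
    {f : α → ℝ} (hf : Monotone f) (hf0 : 0 ≤ f) (hfi : Integrable f ν) :
    (1 + min θ 0) * ∫ y, f y ∂ν ≤ ∫ y, (1 - θ * fgmKernel ν y) * f y ∂ν := by
  have hfk : Integrable (fun y => f y * fgmKernel ν y) ν :=
    hfi.mul_bdd (integrable_fgmKernel ν ν).1 (ae_of_all _ (abs_fgmKernel_le_one ν))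
  have hsplit : ∫ y, (1 - θ * fgmKernel ν y) * f y ∂ν =
      ∫ y, f y ∂ν - θ * ∫ y, f y * fgmKernel ν y ∂ν := by
    rw [← integral_const_mul, ← integral_sub hfi (hfk.const_mul θ)]
    congr with y
    ring
  rw [hsplit]
  rcases le_total 0 θ with hθ | hθ
  · have hassoc : ∫ y, f y * fgmKernel ν y ∂ν ≤ 0 := by
      simpa [integral_fgmKernel_self] using integral_mul_le_integral_mul_integral_of_antivary
        (hf.antivary (antitone_fgmKernel ν)) hfi (integrable_fgmKernel ν ν) hfk
    rw [min_eq_right hθ]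
    linarith [mul_nonpos_of_nonneg_of_nonpos hθ hassoc]
  · have hlow : -∫ y, f y ∂ν ≤ ∫ y, f y * fgmKernel ν y ∂ν := by
      rw [← integral_neg]
      refine integral_mono hfi.neg hfk fun y => ?_
      linarith [mul_le_mul_of_nonneg_left (neg_le_of_abs_le (abs_fgmKernel_le_one ν y)) (hf0 y)]
    rw [min_eq_left hθ]
    linarith [mul_le_mul_of_nonpos_left hlow hθ]

lemma setIntegral_Ioi_fgmKernel (ν : Measure α) [IsFiniteMeasure ν] (x : α) :
    ∫ y in Ioi x, fgmKernel ν y ∂ν = -(ν.real (Iic x) * ν.real (Ioi x)) := by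
  have h : ∫ y in Ioi x, (fgmKernel ν y + ν.real (Iic x)) ∂ν = 0 := by
    rw [← integral_fgmKernel_self (ν.restrict (Ioi x))]
    exact setIntegral_congr_fun measurableSet_Ioi fun y hy => (fgmKernel_restrict_Ioi ν hy).symm
  rw [integral_add (integrable_fgmKernel ν _) (integrable_const _), setIntegral_const,
    smul_eq_mul] at h
  linarith

lemma setIntegral_Ioi_fgmDensity {γ : Type*} [Preorder γ] [MeasurableSpace γ] (θ : ℝ)
    (μ : Measure α) [IsFiniteMeasure μ] (ν : Measure γ) (x : α) (y : γ) :
    ∫ u in Ioi x, fgmDensity θ μ ν (u, y) ∂μ =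
      μ.real (Ioi x) * (1 - θ * μ.real (Iic x) * fgmKernel ν y) := by
  simp only [fgmDensity]
  rw [integral_add (integrable_const _) (((integrable_fgmKernel μ _).mul_const _).const_mul θ),
    integral_const_mul, integral_mul_const, setIntegral_Ioi_fgmKernel, setIntegral_const,
    smul_eq_mul]
  ring

lemma setIntegral_Ioi_prod_Ioi_fgmDensity (θ : ℝ) (μ : Measure α) [IsFiniteMeasure μ]
    (ν : Measure β) [IsFiniteMeasure ν] (x : α) (y : β) :
    ∫ p in Ioi x ×ˢ Ioi y, fgmDensity θ μ ν p ∂μ.prod ν =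
      μ.real (Ioi x) * ν.real (Ioi y) * (1 + θ * μ.real (Iic x) * ν.real (Iic y)) := by
  have hker := (integrable_fgmKernel μ μ).mul_prod (integrable_fgmKernel ν ν)
  unfold fgmDensity
  rw [integral_add (integrable_const _) (hker.const_mul θ).restrict, integral_const_mul,
    setIntegral_prod_mul (fgmKernel μ) (fgmKernel ν), setIntegral_Ioi_fgmKernel,
    setIntegral_Ioi_fgmKernel, setIntegral_const, measureReal_prod_prod, smul_eq_mul]
  ring

lemma eq_withDensity_fgmDensity [NoMinOrder α] [NoMinOrder β] {θ : ℝ} (hθ : |θ| ≤ 1)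
    {μ : Measure α} [IsProbabilityMeasure μ] {ν : Measure β} [IsProbabilityMeasure ν]
    {ρ : Measure (α × β)} [IsFiniteMeasure ρ]
    (hρ : ∀ x y, ρ.real (Ioi x ×ˢ Ioi y) =
      μ.real (Ioi x) * ν.real (Ioi y) * (1 + θ * μ.real (Iic x) * ν.real (Iic y))) :
    ρ = (μ.prod ν).withDensity fun p => ENNReal.ofReal (fgmDensity θ μ ν p) := by
  have := nonempty_of_isProbabilityMeasure μ
  have := nonempty_of_isProbabilityMeasure ν
  refine measure_ext_of_Ioi_prod_Ioi fun x y => ?_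
  rw [withDensity_fgmDensity_apply hθ μ ν (measurableSet_Ioi.prod measurableSet_Ioi),
    setIntegral_Ioi_prod_Ioi_fgmDensity, ← hρ, ofReal_measureReal]

end Kernel

section ProductTail

lemma integrable_measureReal_Ioi_div (μ ρ : Measure ℝ) [IsFiniteMeasure μ]
    [IsFiniteMeasure ρ] (x : ℝ) :
    Integrable (fun y => μ.real (Ioi (x / y))) ρ :=
  .of_bound ((antitone_measureReal_Ioi μ).measurable.comp
    (measurable_const.div measurable_id)).aestronglyMeasurable (μ.real univ)
    (ae_of_all _ fun y => by
      rw [Real.norm_of_nonneg measureReal_nonneg]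
      exact measureReal_mono (subset_univ _))

lemma monotone_indicator_measureReal_Ioi_div (μ : Measure ℝ) [IsFiniteMeasure μ] {x : ℝ}
    (hx : 0 ≤ x) : Monotone ((Ioi 0).indicator fun y => μ.real (Ioi (x / y))) := by
  intro a b hab
  by_cases ha : 0 < a
  · rw [indicator_of_mem (mem_Ioi.2 ha), indicator_of_mem (mem_Ioi.2 (ha.trans_le hab))]
    exact antitone_measureReal_Ioi μ (by gcongr)
  · rw [indicator_of_notMem (by simpa using ha)]
    exact indicator_nonneg (fun _ _ => measureReal_nonneg) _

lemma sq_measureReal_Ioi_div_le (μ : Measure ℝ) [IsProbabilityMeasure μ] (x : ℝ) {y M : ℝ}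
    (hy : 0 < y) (hM : 0 < M) :
    μ.real (Ioi (x / y)) ^ 2 ≤
      μ.real (Ioi M) * μ.real (Ioi (x / y)) + (Ioi (M⁻¹ * x)).indicator (fun _ => 1) y := by
  by_cases hxy : M⁻¹ * x < y
  · rw [indicator_of_mem (mem_Ioi.2 hxy)]
    have : μ.real (Ioi (x / y)) ^ 2 ≤ 1 := pow_le_one₀ measureReal_nonneg measureReal_le_one
    have : 0 ≤ μ.real (Ioi M) * μ.real (Ioi (x / y)) := by positivity
    linarith
  · have hMxy : M ≤ x / y := by
      rw [le_div_iff₀ hy, ← le_inv_mul_iff₀ hM]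
      exact not_lt.1 hxy
    rw [indicator_of_notMem (by simpa using hxy), add_zero, sq]
    exact mul_le_mul_of_nonneg_right (antitone_measureReal_Ioi μ hMxy) measureReal_nonneg

lemma setIntegral_measureReal_Ioi_div_sq_le (μ : Measure ℝ) [IsProbabilityMeasure μ]
    (ν : Measure ℝ) [IsFiniteMeasure ν] (x : ℝ) {M : ℝ} (hM : 0 < M) :
    ∫ y in Ioi 0, μ.real (Ioi (x / y)) ^ 2 ∂ν ≤
      μ.real (Ioi M) * ∫ y in Ioi 0, μ.real (Ioi (x / y)) ∂ν + ν.real (Ioi (M⁻¹ * x)) := by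
  have htail := integrable_measureReal_Ioi_div μ (ν.restrict (Ioi 0)) x
  have hind : Integrable ((Ioi (M⁻¹ * x)).indicator fun _ => (1 : ℝ)) (ν.restrict (Ioi 0)) :=
    (integrable_const _).indicator measurableSet_Ioi
  calc ∫ y in Ioi 0, μ.real (Ioi (x / y)) ^ 2 ∂ν
    _ ≤ ∫ y in Ioi 0, (μ.real (Ioi M) * μ.real (Ioi (x / y)) +
          (Ioi (M⁻¹ * x)).indicator (fun _ => 1) y) ∂ν :=
      integral_mono_of_nonneg (ae_of_all _ fun _ => sq_nonneg _) ((htail.const_mul _).add hind)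
        (ae_restrict_of_forall_mem measurableSet_Ioi fun _ hy =>
          sq_measureReal_Ioi_div_le μ x hy hM)
    _ = μ.real (Ioi M) * ∫ y in Ioi 0, μ.real (Ioi (x / y)) ∂ν +
          (ν.restrict (Ioi 0)).real (Ioi (M⁻¹ * x)) := by
      rw [integral_add (htail.const_mul _) hind, integral_const_mul,
        integral_indicator measurableSet_Ioi]
      simp
    _ ≤ _ := by
      gcongr
      exact ENNReal.toReal_mono (measure_ne_top _ _) (Measure.restrict_apply_le _ _)

variable {θ : ℝ} (μ ν : Measure ℝ) [IsProbabilityMeasure μ] [IsProbabilityMeasure ν]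

lemma withDensity_fgmDensity_real_lt_mul (hθ : |θ| ≤ 1) (hν : ∀ᵐ y ∂ν, 0 ≤ y) {x : ℝ}
    (hx : 0 ≤ x) :
    ((μ.prod ν).withDensity fun p => ENNReal.ofReal (fgmDensity θ μ ν p)).real
        {p | x < p.1 * p.2} =
      ∫ y in Ioi 0, μ.real (Ioi (x / y)) * (1 - θ * μ.real (Iic (x / y)) * fgmKernel ν y) ∂ν := by
  have hs : MeasurableSet {p : ℝ × ℝ | x < p.1 * p.2} :=
    measurableSet_lt measurable_const (measurable_fst.mul measurable_snd)
  rw [Measure.real, withDensity_fgmDensity_apply hθ μ ν hs,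
    ENNReal.toReal_ofReal (integral_nonneg (fgmDensity_nonneg hθ μ ν)), ← integral_indicator hs,
    integral_prod_symm _ ((integrable_fgmDensity θ μ ν).indicator hs),
    ← integral_indicator measurableSet_Ioi]
  refine integral_congr_ae ?_
  filter_upwards [hν] with y hy
  rcases hy.eq_or_lt with rfl | hy
  · simp [indicator_of_notMem, hx.not_gt]
  · have hslice : (fun u => {p : ℝ × ℝ | x < p.1 * p.2}.indicator (fgmDensity θ μ ν) (u, y)) =
        (Ioi (x / y)).indicator fun u => fgmDensity θ μ ν (u, y) := by
      ext u
      simp [indicator_apply, div_lt_iff₀ hy]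
    rw [hslice, integral_indicator measurableSet_Ioi, setIntegral_Ioi_fgmDensity,
      indicator_of_mem (mem_Ioi.2 hy)]

lemma le_setIntegral_one_sub_mul_fgmKernel_mul_measureReal {x : ℝ} (hx : 0 ≤ x) :
    (1 + min θ 0) * ∫ y in Ioi 0, μ.real (Ioi (x / y)) ∂ν ≤
      ∫ y in Ioi 0, (1 - θ * fgmKernel ν y) * μ.real (Ioi (x / y)) ∂ν := by
  have h := le_integral_one_sub_mul_fgmKernel θ ν
    (monotone_indicator_measureReal_Ioi_div μ hx) (indicator_nonneg fun _ _ => measureReal_nonneg)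
    ((integrable_measureReal_Ioi_div μ ν x).indicator measurableSet_Ioi)
  simp_rw [← indicator_mul_right (Ioi 0) fun y => 1 - θ * fgmKernel ν y] at h
  rwa [integral_indicator measurableSet_Ioi, integral_indicator measurableSet_Ioi] at h

lemma abs_setIntegral_one_sub_mul_fgmKernel_sub_le (hθ : |θ| ≤ 1) (x : ℝ) :
    |∫ y in Ioi 0, μ.real (Ioi (x / y)) * (1 - θ * μ.real (Iic (x / y)) * fgmKernel ν y) ∂ν -
        ∫ y in Ioi 0, (1 - θ * fgmKernel ν y) * μ.real (Ioi (x / y)) ∂ν| ≤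
      ∫ y in Ioi 0, μ.real (Ioi (x / y)) ^ 2 ∂ν := by
  have htail := integrable_measureReal_Ioi_div μ (ν.restrict (Ioi 0)) x
  have hsq : Integrable (fun y => μ.real (Ioi (x / y)) ^ 2) (ν.restrict (Ioi 0)) := by
    simp_rw [sq]
    exact htail.mul_bdd htail.1 (c := 1) (ae_of_all _ fun y => by
      rw [Real.norm_of_nonneg measureReal_nonneg]
      exact measureReal_le_one)
  have hk := integrable_fgmKernel ν (ν.restrict (Ioi 0))
  have hk1 := ae_of_all (ν.restrict (Ioi 0)) (abs_fgmKernel_le_one ν)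
  have hmain : Integrable (fun y => (1 - θ * fgmKernel ν y) * μ.real (Ioi (x / y)))
      (ν.restrict (Ioi 0)) := by
    refine (htail.sub ((htail.mul_bdd hk.1 hk1).const_mul θ)).congr (ae_of_all _ fun y => ?_)
    simp only [Pi.sub_apply]
    ring
  have hsplit (y : ℝ) : μ.real (Ioi (x / y)) * (1 - θ * μ.real (Iic (x / y)) * fgmKernel ν y) =
      (1 - θ * fgmKernel ν y) * μ.real (Ioi (x / y)) +
        θ * (μ.real (Ioi (x / y)) ^ 2 * fgmKernel ν y) := by
    rw [← compl_Ioi, probReal_compl_eq_one_sub measurableSet_Ioi]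
    ring
  simp_rw [hsplit]
  rw [integral_add hmain ((hsq.mul_bdd hk.1 hk1).const_mul θ), add_sub_cancel_left,
    ← Real.norm_eq_abs]
  refine norm_integral_le_of_norm_le hsq (ae_of_all _ fun y => ?_)
  rw [norm_mul, norm_mul, norm_pow, Real.norm_of_nonneg measureReal_nonneg]
  calc ‖θ‖ * (μ.real (Ioi (x / y)) ^ 2 * ‖fgmKernel ν y‖)
    _ ≤ 1 * (μ.real (Ioi (x / y)) ^ 2 * 1) := by
      gcongr
      · exact hθ
      · exact abs_fgmKernel_le_one ν y
    _ = μ.real (Ioi (x / y)) ^ 2 := by ring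

end ProductTail

section RandomVariable

variable {Ω : Type*} [MeasureSpace Ω] {X Y Z : Ω → ℝ}

lemma rvTail_eq_map_real_Ioi (hZ : AEMeasurable Z) (x : ℝ) :
    rvTail Z x = (Measure.map Z ℙ).real (Ioi x) :=
  (map_measureReal_apply_of_aemeasurable hZ measurableSet_Ioi).symm

lemma rvCdf_eq_map_real_Iic (hZ : AEMeasurable Z) (x : ℝ) :
    rvCdf Z x = (Measure.map Z ℙ).real (Iic x) :=
  (map_measureReal_apply_of_aemeasurable hZ measurableSet_Iic).symm

lemma rvCdfLeft_eq_map_real_Iio (hZ : AEMeasurable Z) (x : ℝ) :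
    rvCdfLeft Z x = (Measure.map Z ℙ).real (Iio x) :=
  (map_measureReal_apply_of_aemeasurable hZ measurableSet_Iio).symm

lemma distSupport_eq_support_map (hZ : AEMeasurable Z) :
    distSupport Z = (Measure.map Z ℙ).support := by
  ext y
  rw [(nhds_basis_Ioo_pos y).mem_measureSupport]
  simp_rw [Measure.map_apply_of_aemeasurable hZ measurableSet_Ioo]
  rfl

lemma rvTail_congr {a x : ℝ} (h : ∀ᵐ ω, a < Z ω ↔ x < Z ω) : rvTail Z a = rvTail Z x :=
  measureReal_congr (eventuallyEq_set.2 h)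

lemma FGM.abs_le_one {θ : ℝ} (h : FGM X Y θ) : |θ| ≤ 1 := abs_le.2 h.1

lemma exists_mem_distSupport_ae_lt_iff (hZ : AEMeasurable Z) {x : ℝ} (hx : rvCdf Z x ≠ 0) :
    ∃ a ∈ distSupport Z, ∀ᵐ ω, a < Z ω ↔ x < Z ω := by
  have hx' : Measure.map Z ℙ (Iic x) ≠ 0 := fun h => hx <| by
    rw [rvCdf_eq_map_real_Iic hZ, Measure.real, h, ENNReal.toReal_zero]
  obtain ⟨a, ha, hax, hnull⟩ := exists_mem_support_le_measure_Ioc_eq_zero hx'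
  refine ⟨a, distSupport_eq_support_map hZ ▸ ha, ?_⟩
  filter_upwards [ae_of_ae_map hZ (measure_eq_zero_iff_ae_notMem.1 hnull)] with ω hω
  exact ⟨fun h => not_le.1 fun hle => hω ⟨h, hle⟩, hax.trans_lt⟩

variable [IsProbabilityMeasure (ℙ : Measure Ω)]

lemma rvCdf_eq_one_sub_rvTail (hZ : AEMeasurable Z) (x : ℝ) : rvCdf Z x = 1 - rvTail Z x := by
  have := Measure.isProbabilityMeasure_map hZ
  rw [rvCdf_eq_map_real_Iic hZ, rvTail_eq_map_real_Ioi hZ, ← compl_Ioi,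
    probReal_compl_eq_one_sub measurableSet_Ioi]

lemma tendsto_rvTail_atTop (hZ : AEMeasurable Z) : Tendsto (rvTail Z) atTop (nhds 0) := by
  have := Measure.isProbabilityMeasure_map hZ
  have hcdf (x : ℝ) : rvTail Z x = 1 - cdf (Measure.map Z ℙ) x := by
    rw [cdf_eq_real, ← rvCdf_eq_map_real_Iic hZ, rvCdf_eq_one_sub_rvTail hZ, sub_sub_cancel]
  simpa [funext hcdf] using (tendsto_cdf_atTop (Measure.map Z ℙ)).const_sub 1

lemma fgmKernel_map_eq (hZ : AEMeasurable Z) (y : ℝ) :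
    fgmKernel (Measure.map Z ℙ) y = -(rvCdf Z y + rvCdfLeft Z y - 1) := by
  rw [fgmKernel, ← rvTail_eq_map_real_Ioi hZ, ← rvCdfLeft_eq_map_real_Iio hZ,
    rvCdf_eq_one_sub_rvTail hZ]
  ring

lemma ae_lt_of_rvCdf_eq_zero {x : ℝ} (hx : rvCdf Z x = 0) : ∀ᵐ ω, x < Z ω := by
  simpa [ae_iff, rvCdf] using (measureReal_eq_zero_iff).1 hx

namespace FGM

variable {θ : ℝ}

-- Off the support, move each coordinate left to the nearest support point: no mass is crossed.
lemma real_lt_and_lt (h : FGM X Y θ) (hX : AEMeasurable X) (hY : AEMeasurable Y) (x y : ℝ) :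
    (ℙ : Measure Ω).real {ω | x < X ω ∧ y < Y ω} =
      rvTail X x * rvTail Y y * (1 + θ * rvCdf X x * rvCdf Y y) := by
  by_cases hx : rvCdf X x = 0
  · have hXY : (ℙ : Measure Ω).real {ω | x < X ω ∧ y < Y ω} = rvTail Y y :=
      measureReal_congr <| eventuallyEq_set.2 <|
        (ae_lt_of_rvCdf_eq_zero hx).mono fun ω hω => and_iff_right hω
    have := rvCdf_eq_one_sub_rvTail hX x
    rw [hXY, hx, show rvTail X x = 1 by linarith]
    ring
  by_cases hy : rvCdf Y y = 0
  · have hXY : (ℙ : Measure Ω).real {ω | x < X ω ∧ y < Y ω} = rvTail X x :=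
      measureReal_congr <| eventuallyEq_set.2 <|
        (ae_lt_of_rvCdf_eq_zero hy).mono fun ω hω => and_iff_left hω
    have := rvCdf_eq_one_sub_rvTail hY y
    rw [hXY, hy, show rvTail Y y = 1 by linarith]
    ring
  obtain ⟨a, ha, hXa⟩ := exists_mem_distSupport_ae_lt_iff hX hx
  obtain ⟨b, hb, hYb⟩ := exists_mem_distSupport_ae_lt_iff hY hy
  have hXY : (ℙ : Measure Ω).real {ω | a < X ω ∧ b < Y ω} =
      (ℙ : Measure Ω).real {ω | x < X ω ∧ y < Y ω} := by
    refine measureReal_congr (eventuallyEq_set.2 ?_)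
    filter_upwards [hXa, hYb] with ω hXω hYω using and_congr hXω hYω
  rw [rvCdf_eq_one_sub_rvTail hX, rvCdf_eq_one_sub_rvTail hY, ← rvTail_congr hXa,
    ← rvTail_congr hYb, ← rvCdf_eq_one_sub_rvTail hX, ← rvCdf_eq_one_sub_rvTail hY, ← hXY]
  exact h.2 a ha b hb

lemma map_prodMk_eq_withDensity (h : FGM X Y θ) (hX : AEMeasurable X) (hY : AEMeasurable Y) :
    Measure.map (fun ω => (X ω, Y ω)) ℙ =
      ((Measure.map X ℙ).prod (Measure.map Y ℙ)).withDensity fun p =>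
        ENNReal.ofReal (fgmDensity θ (Measure.map X ℙ) (Measure.map Y ℙ) p) := by
  have := Measure.isProbabilityMeasure_map hX
  have := Measure.isProbabilityMeasure_map hY
  refine eq_withDensity_fgmDensity h.abs_le_one fun x y => ?_
  rw [map_measureReal_apply_of_aemeasurable (hX.prodMk hY)
      (measurableSet_Ioi.prod measurableSet_Ioi), ← rvTail_eq_map_real_Ioi hX,
    ← rvTail_eq_map_real_Ioi hY, ← rvCdf_eq_map_real_Iic hX, ← rvCdf_eq_map_real_Iic hY]
  exact h.real_lt_and_lt hX hY x y

lemma rvTail_mul_eq (h : FGM X Y θ) (hX : AEMeasurable X) (hY : AEMeasurable Y)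
    (hY0 : ∀ᵐ ω, 0 ≤ Y ω) {x : ℝ} (hx : 0 ≤ x) :
    rvTail (fun ω => X ω * Y ω) x =
      ∫ y in Ioi 0, (Measure.map X ℙ).real (Ioi (x / y)) *
        (1 - θ * (Measure.map X ℙ).real (Iic (x / y)) * fgmKernel (Measure.map Y ℙ) y)
          ∂Measure.map Y ℙ := by
  have := Measure.isProbabilityMeasure_map hX
  have := Measure.isProbabilityMeasure_map hY
  have hs : MeasurableSet {p : ℝ × ℝ | x < p.1 * p.2} :=
    measurableSet_lt measurable_const (measurable_fst.mul measurable_snd)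
  rw [← withDensity_fgmDensity_real_lt_mul _ _ h.abs_le_one
      ((ae_map_iff hY measurableSet_Ici).2 hY0) hx, ← h.map_prodMk_eq_withDensity hX hY,
    map_measureReal_apply_of_aemeasurable (hX.prodMk hY) hs]
  rfl

lemma abs_rvTail_mul_sub_setIntegral_le (h : FGM X Y θ) (hX : AEMeasurable X)
    (hY : AEMeasurable Y) (hY0 : ∀ᵐ ω, 0 ≤ Y ω) {x M : ℝ} (hx : 0 ≤ x) (hM : 0 < M) :
    (1 + min θ 0) * |rvTail (fun ω => X ω * Y ω) x - ∫ y in Ioi 0,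
        (1 + θ * (rvCdf Y y + rvCdfLeft Y y - 1)) * rvTail X (x / y) ∂Measure.map Y ℙ| ≤
      rvTail X M * (∫ y in Ioi 0,
        (1 + θ * (rvCdf Y y + rvCdfLeft Y y - 1)) * rvTail X (x / y) ∂Measure.map Y ℙ) +
      rvTail Y (M⁻¹ * x) := by
  have := Measure.isProbabilityMeasure_map hX
  have := Measure.isProbabilityMeasure_map hY
  have hlimit (y : ℝ) : (1 + θ * (rvCdf Y y + rvCdfLeft Y y - 1)) * rvTail X (x / y) =
      (1 - θ * fgmKernel (Measure.map Y ℙ) y) * (Measure.map X ℙ).real (Ioi (x / y)) := by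
    rw [fgmKernel_map_eq hY, rvTail_eq_map_real_Ioi hX]
    ring
  simp_rw [hlimit]
  rw [h.rvTail_mul_eq hX hY hY0 hx, rvTail_eq_map_real_Ioi hX, rvTail_eq_map_real_Ioi hY]
  set μ := Measure.map X ℙ
  set ν := Measure.map Y ℙ
  have hm0 : 0 ≤ 1 + min θ 0 := by linarith [le_min h.1.1 neg_one_lt_zero.le]
  have hm1 : 1 + min θ 0 ≤ 1 := by linarith [min_le_right θ 0]
  calc (1 + min θ 0) * |_ - _|
    _ ≤ (1 + min θ 0) * ∫ y in Ioi 0, μ.real (Ioi (x / y)) ^ 2 ∂ν := by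
      gcongr
      exact abs_setIntegral_one_sub_mul_fgmKernel_sub_le μ ν h.abs_le_one x
    _ ≤ (1 + min θ 0) * (μ.real (Ioi M) * ∫ y in Ioi 0, μ.real (Ioi (x / y)) ∂ν +
          ν.real (Ioi (M⁻¹ * x))) := by
      gcongr
      exact setIntegral_measureReal_Ioi_div_sq_le μ ν x hM
    _ = μ.real (Ioi M) * ((1 + min θ 0) * ∫ y in Ioi 0, μ.real (Ioi (x / y)) ∂ν) +
          (1 + min θ 0) * ν.real (Ioi (M⁻¹ * x)) := by ring
    _ ≤ _ := by
      gcongr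
      · exact le_setIntegral_one_sub_mul_fgmKernel_mul_measureReal μ ν hx
      · exact mul_le_of_le_one_left measureReal_nonneg hm1

end FGM

end RandomVariable

theorem product_tail_asymp_of_fgm_theta_one_general {Ω : Type*} [MeasureSpace Ω]
    [IsProbabilityMeasure (ℙ : Measure Ω)] {X Y : Ω → ℝ} {θ : ℝ} (hX : AEMeasurable X)
    (hY : AEMeasurable Y) (hY0 : ∀ᵐ ω, 0 ≤ Y ω) (hFGM : FGM X Y θ) (hθ : -1 < θ)
    (hA2 : Assumption2 X Y) :
    (fun x => rvTail (fun ω => X ω * Y ω) x) ~[atTop]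
      (fun x => ∫ y in Ioi (0 : ℝ),
        (1 + θ * (rvCdf Y y + rvCdfLeft Y y - 1)) * rvTail X (x / y) ∂(Measure.map Y ℙ)) := by
  have hm : 0 < 1 + min θ 0 := by linarith [lt_min hθ neg_one_lt_zero]
  refine isEquivalent_of_sub_isLittleO_norm_add_norm (isLittleO_iff.2 fun c hc => ?_)
  obtain ⟨M, hMc, hM⟩ := (((tendsto_rvTail_atTop hX).eventually_le_const
    (mul_pos hm hc)).and (eventually_gt_atTop 0)).exists
  filter_upwards [isLittleO_iff.1 (hA2 M⁻¹ (inv_pos.2 hM)) (mul_pos hm hc), eventually_ge_atTop 0]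
    with x hYx hx
  set H := rvTail (fun ω => X ω * Y ω) x
  set I := ∫ y in Ioi (0 : ℝ),
    (1 + θ * (rvCdf Y y + rvCdfLeft Y y - 1)) * rvTail X (x / y) ∂Measure.map Y ℙ
  rw [Real.norm_of_nonneg (by positivity : 0 ≤ ‖H‖ + ‖I‖)]
  refine le_of_mul_le_mul_left ?_ hm
  calc (1 + min θ 0) * ‖H - I‖
    _ ≤ rvTail X M * I + rvTail Y (M⁻¹ * x) :=
      hFGM.abs_rvTail_mul_sub_setIntegral_le hX hY hY0 hx hM
    _ ≤ rvTail X M * ‖I‖ + ‖rvTail Y (M⁻¹ * x)‖ := by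
      gcongr
      exacts [measureReal_nonneg, Real.le_norm_self I, Real.le_norm_self _]
    _ ≤ (1 + min θ 0) * c * ‖I‖ + (1 + min θ 0) * c * ‖H‖ := by gcongr
    _ = (1 + min θ 0) * (c * (‖H‖ + ‖I‖)) := by ring

theorem product_tail_asymp_of_fgm_theta_one {Ω : Type*} [MeasureSpace Ω] [IsProbabilityMeasure (ℙ : Measure Ω)]
    (X Y : Ω → ℝ) (hXm : Measurable X) (hYm : Measurable Y)
    (hYnonneg : ∀ ω, 0 ≤ Y ω)
    (hFunb : UnboundedDist X)
    (hXnd : ℙ {ω | X ω = 0} ≠ 1) (hYnd : ℙ {ω | Y ω = 0} ≠ 1)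
    (hFGM : FGM X Y 1)
    (hatom : 0 < ℙ {ω | Y ω = sInf {y : ℝ | 0 < rvCdf Y y}})
    (hA2 : Assumption2 X Y) :
    (fun x => rvTail (fun ω => X ω * Y ω) x) ~[atTop]
      (fun x => ∫ y in Ioi (0 : ℝ),
        (1 + (rvCdf Y y + rvCdfLeft Y y - 1)) * rvTail X (x / y) ∂(Measure.map Y ℙ)) := by
  simpa only [one_mul] using product_tail_asymp_of_fgm_theta_one_general hXm.aemeasurable
    hYm.aemeasurable (ae_of_all _ hYnonneg) hFGM (by norm_num) hA2
end
end
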